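/- arXiv:2210.15730 — 3 statements merged into one kernel-verified Lean document; each statement's English description precedes it below -/
import Mathlib

section
/- Let g be a Schwartz function on ℝ and n ∈ ℤ_{≥0}. Define a_n(g)(v) = Σ_{k=0}^{n} Σ_{l=0}^{k} (1/(k−l)!) · (g^{(2l+1)}(0)/(2l+1)!) · v^{2k+1} e^{−v²}. Then g − a_n(g) is a Schwartz function all of whose odd derivatives of order ≤ 2n+1 vanish at 0; that is, (g − a_n(g))^{(2s+1)}(0) = 0 for every s = 0, 1, …, n. -/
open Real Finset

/-- The correction term a_n(g)(v). -/
noncomputable def aApprox (g : ℝ → ℝ) (n : ℕ) (v : ℝ) : ℝ :=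
  ∑ k ∈ Finset.range (n + 1), ∑ l ∈ Finset.range (k + 1),
    (1 / (Nat.factorial (k - l)) : ℝ) *
      (iteratedDeriv (2 * l + 1) g 0 / Nat.factorial (2 * l + 1)) *
      (v ^ (2 * k + 1) * Real.exp (-v ^ 2))

/-!
Multiplying by an even weight `w` maps odd jets at `0` to odd jets: in the Leibniz formula for
`(f * w)^(2k+1)(0)` only the odd derivatives of `f` survive. Applied to `w = exp(x²)`, this shows
that the coefficients of `aApprox g n` are the odd Taylor coefficients of `g * exp(x²)`, that is
`aApprox g n = P * exp(-x²)` with `P` the odd part of the Taylor polynomial of `g * exp(x²)`. Hence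
`g - aApprox g n = (g * exp(x²) - P) * exp(-x²)`, where the first factor has vanishing odd
derivatives of order at most `2n+1`, and then so does the product since `exp(-x²)` is even.
-/

open Filter Topology Polynomial
open scoped Nat

section EvenWeight

variable {𝕜 : Type*} [NontriviallyNormedField 𝕜]

theorem iteratedDeriv_zero_of_even_of_odd [CharZero 𝕜] {F : Type*} [NormedAddCommGroup F]
    [NormedSpace 𝕜 F] {f : 𝕜 → F} (hf : f.Even) {m : ℕ} (hm : Odd m) :
    iteratedDeriv m f 0 = 0 := by
  have h := iteratedDeriv_comp_neg m f 0
  rw [funext hf, hm.neg_one_pow, neg_zero, neg_one_smul, eq_neg_iff_add_eq_zero,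
    ← two_smul 𝕜] at h
  exact (smul_eq_zero.mp h).resolve_left two_ne_zero

theorem sum_range_two_mul_of_even_eq_zero {M : Type*} [AddCommMonoid M] {F : ℕ → M} {n : ℕ}
    (hF : ∀ i < n, F (2 * i) = 0) :
    ∑ i ∈ range (2 * n), F i = ∑ i ∈ range n, F (2 * i + 1) := by
  induction n with
  | zero => simp
  | succ n ih =>
    rw [mul_add_one, sum_range_succ, sum_range_succ, hF n n.lt_succ_self, add_zero,
      ih fun i hi ↦ hF i (hi.trans n.lt_succ_self), sum_range_succ]

theorem iteratedDeriv_odd_mul_even [CharZero 𝕜] {𝔸 : Type*} [NormedRing 𝔸] [NormedAlgebra 𝕜 𝔸]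
    {f w : 𝕜 → 𝔸} {k : ℕ} (hf : ContDiffAt 𝕜 (2 * k + 1 : ℕ) f 0)
    (hw : ContDiffAt 𝕜 (2 * k + 1 : ℕ) w 0) (hw_even : w.Even) :
    iteratedDeriv (2 * k + 1) (f * w) 0 = ∑ l ∈ range (k + 1),
      (2 * k + 1).choose (2 * l + 1) * iteratedDeriv (2 * l + 1) f 0 *
        iteratedDeriv (2 * (k - l)) w 0 := by
  rw [iteratedDeriv_mul hf hw, show 2 * k + 1 + 1 = 2 * (k + 1) by ring,
    sum_range_two_mul_of_even_eq_zero]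
  · exact sum_congr rfl fun l _ ↦ by rw [show 2 * k + 1 - (2 * l + 1) = 2 * (k - l) by omega]
  · intro i hi
    have hodd : Odd (2 * k + 1 - 2 * i) := ⟨k - i, by omega⟩
    rw [iteratedDeriv_zero_of_even_of_odd hw_even hodd, mul_zero]

theorem iteratedDeriv_succ_id_mul_zero {m : ℕ} {f : 𝕜 → 𝕜}
    (hf : ContDiffAt 𝕜 (m + 1 : ℕ) f 0) :
    iteratedDeriv (m + 1) (fun x ↦ x * f x) 0 = (m + 1) * iteratedDeriv m f 0 := by
  rw [iteratedDeriv_fun_mul contDiffAt_fun_id hf, sum_eq_single_of_mem 1 (by simp)]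
  · simp
  · intro i _ hi
    simp [iteratedDeriv_fun_id_zero, hi]

end EvenWeight

section ExpMulSq

variable (b : ℝ)

theorem deriv_exp_mul_sq :
    deriv (fun x : ℝ ↦ exp (b * x ^ 2)) = fun x ↦ 2 * b * (x * exp (b * x ^ 2)) := by
  funext x
  rw [((hasDerivAt_pow 2 x).const_mul b).exp.deriv]
  push_cast
  ring

theorem iteratedDeriv_even_exp_mul_sq_zero (i : ℕ) :
    iteratedDeriv (2 * i) (fun x : ℝ ↦ exp (b * x ^ 2)) 0 = (2 * i)! * (b ^ i / i !) := by
  induction i with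
  | zero => simp
  | succ i ih =>
    have hsmooth : ContDiff ℝ (2 * i + 1 : ℕ) fun x : ℝ ↦ exp (b * x ^ 2) := by fun_prop
    rw [mul_add_one, iteratedDeriv_succ', deriv_exp_mul_sq, iteratedDeriv_const_mul_field,
      iteratedDeriv_succ_id_mul_zero hsmooth.contDiffAt, ih]
    simp only [Nat.factorial_succ]
    push_cast
    field_simp
    ring

theorem iteratedDeriv_odd_mul_exp_mul_sq_zero {f : ℝ → ℝ} {k : ℕ}
    (hf : ContDiffAt ℝ (2 * k + 1 : ℕ) f 0) :
    iteratedDeriv (2 * k + 1) (f * fun x ↦ exp (b * x ^ 2)) 0 / (2 * k + 1)! =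
      ∑ l ∈ range (k + 1), b ^ (k - l) / (k - l)! *
        (iteratedDeriv (2 * l + 1) f 0 / (2 * l + 1)!) := by
  rw [iteratedDeriv_odd_mul_even hf (by fun_prop) (fun x ↦ by rw [neg_sq]), sum_div]
  refine sum_congr rfl fun l hl ↦ ?_
  have hlk : 2 * l + 1 ≤ 2 * k + 1 := by grind
  rw [iteratedDeriv_even_exp_mul_sq_zero, Nat.cast_choose ℝ hlk,
    show 2 * k + 1 - (2 * l + 1) = 2 * (k - l) by omega]
  field_simp

end ExpMulSq

section OddTaylorPolynomial

variable {𝕜 : Type*} [NontriviallyNormedField 𝕜]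

theorem contDiff_polynomial_eval (p : 𝕜[X]) {m : WithTop ℕ∞} :
    ContDiff 𝕜 m fun x ↦ p.eval x :=
  p.contDiff_aeval m

theorem iteratedDeriv_polynomial_eval (m : ℕ) (p : 𝕜[X]) :
    iteratedDeriv m (fun x ↦ p.eval x) = fun x ↦ (derivative^[m] p).eval x := by
  induction m generalizing p with
  | zero => simp
  | succ m ih =>
    rw [iteratedDeriv_succ', show deriv (fun x ↦ p.eval x) = _ from funext fun x ↦ p.deriv, ih,
      Function.iterate_succ_apply]

theorem iteratedDeriv_polynomial_eval_zero (m : ℕ) (p : 𝕜[X]) :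
    iteratedDeriv m (fun x ↦ p.eval x) 0 = m ! * p.coeff m := by
  simp only [iteratedDeriv_polynomial_eval]
  rw [← coeff_zero_eq_eval_zero, coeff_iterate_derivative, zero_add, Nat.descFactorial_self,
    nsmul_eq_mul]

/-- The odd part of the Taylor polynomial of `f` at `0`, of degree at most `2 * n + 1`. -/
noncomputable def oddTaylorPolynomial (f : 𝕜 → 𝕜) (n : ℕ) : 𝕜[X] :=
  ∑ k ∈ range (n + 1), monomial (2 * k + 1) (iteratedDeriv (2 * k + 1) f 0 / (2 * k + 1)!)

theorem coeff_oddTaylorPolynomial (f : 𝕜 → 𝕜) {n s : ℕ} (hs : s ≤ n) :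
    (oddTaylorPolynomial f n).coeff (2 * s + 1) =
      iteratedDeriv (2 * s + 1) f 0 / (2 * s + 1)! := by
  simp [oddTaylorPolynomial, coeff_monomial, hs]

theorem iteratedDeriv_odd_sub_oddTaylorPolynomial [CharZero 𝕜] {f : 𝕜 → 𝕜} {n s : ℕ} (hs : s ≤ n)
    (hf : ContDiffAt 𝕜 (2 * s + 1 : ℕ) f 0) :
    iteratedDeriv (2 * s + 1) (f - fun x ↦ (oddTaylorPolynomial f n).eval x) 0 = 0 := by
  rw [iteratedDeriv_sub hf (contDiff_polynomial_eval _).contDiffAt,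
    iteratedDeriv_polynomial_eval_zero, coeff_oddTaylorPolynomial f hs,
    mul_div_cancel₀ _ (Nat.cast_ne_zero.mpr (Nat.factorial_ne_zero _)), sub_self]

end OddTaylorPolynomial

section PolynomialGaussian

variable {b : ℝ}

/-- The product of the polynomial function `p` and the Gaussian `exp (-b * x ^ 2)`. For `0 < b` it
is a Schwartz function, see `polynomialGaussianSchwartz`. -/
noncomputable def polynomialGaussian (b : ℝ) (p : ℝ[X]) (x : ℝ) : ℝ :=
  p.eval x * exp (-b * x ^ 2)

theorem contDiff_polynomialGaussian (b : ℝ) (p : ℝ[X]) {m : WithTop ℕ∞} :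
    ContDiff ℝ m (polynomialGaussian b p) :=
  (contDiff_polynomial_eval p).mul (by fun_prop)

theorem deriv_polynomialGaussian (b : ℝ) (p : ℝ[X]) :
    deriv (polynomialGaussian b p) =
      polynomialGaussian b (derivative p - C (2 * b) * X * p) := by
  funext x
  have h : HasDerivAt (polynomialGaussian b p) _ x :=
    (p.hasDerivAt x).mul ((hasDerivAt_pow 2 x).const_mul (-b)).exp
  rw [h.deriv]
  simp only [polynomialGaussian, eval_sub, eval_mul, eval_C, eval_X]
  push_cast
  ring

theorem exists_iteratedDeriv_polynomialGaussian (b : ℝ) (m : ℕ) (p : ℝ[X]) :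
    ∃ q, iteratedDeriv m (polynomialGaussian b p) = polynomialGaussian b q := by
  induction m generalizing p with
  | zero => exact ⟨p, iteratedDeriv_zero⟩
  | succ m ih =>
    rw [iteratedDeriv_succ', deriv_polynomialGaussian]
    exact ih _

theorem tendsto_polynomialGaussian_cocompact (hb : 0 < b) (p : ℝ[X]) :
    Tendsto (polynomialGaussian b p) (cocompact ℝ) (𝓝 0) := by
  induction p using Polynomial.induction_on' with
  | add p q hp hq =>
    have hadd : polynomialGaussian b (p + q) = polynomialGaussian b p + polynomialGaussian b q := by
      funext x
      simp [polynomialGaussian, add_mul]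
    rw [hadd, ← add_zero 0]
    exact hp.add hq
  | monomial k a =>
    have h := (tendsto_rpow_abs_mul_exp_neg_mul_sq_cocompact hb k).const_mul |a|
    rw [mul_zero] at h
    refine squeeze_zero_norm (fun x ↦ ?_) h
    simp [polynomialGaussian, mul_assoc]

theorem exists_abs_polynomialGaussian_le (hb : 0 < b) (p : ℝ[X]) :
    ∃ C, ∀ x, |polynomialGaussian b p x| ≤ C := by
  let f : ZeroAtInftyContinuousMap ℝ ℝ :=
    ⟨⟨polynomialGaussian b p, (contDiff_polynomialGaussian b p (m := 0)).continuous⟩,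
      tendsto_polynomialGaussian_cocompact hb p⟩
  exact ⟨‖f.toBCF‖, f.toBCF.norm_coe_le_norm⟩

/-- The function `polynomialGaussian b p` as a Schwartz function, for `0 < b`. -/
noncomputable def polynomialGaussianSchwartz (hb : 0 < b) (p : ℝ[X]) : SchwartzMap ℝ ℝ where
  toFun := polynomialGaussian b p
  smooth' := contDiff_polynomialGaussian b p
  decay' k m := by
    obtain ⟨q, hq⟩ := exists_iteratedDeriv_polynomialGaussian b m p
    obtain ⟨C, hC⟩ := exists_abs_polynomialGaussian_le hb (X ^ k * q)
    refine ⟨C, fun x ↦ ?_⟩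
    simpa [norm_iteratedFDeriv_eq_norm_iteratedDeriv, hq, polynomialGaussian, mul_assoc] using hC x

end PolynomialGaussian

section Approximation

variable {g : ℝ → ℝ} {n : ℕ}

theorem aApprox_eq_polynomialGaussian (hg : ContDiffAt ℝ (2 * n + 1 : ℕ) g 0) :
    aApprox g n =
      polynomialGaussian 1 (oddTaylorPolynomial (g * fun x ↦ exp (x ^ 2)) n) := by
  funext v
  simp only [aApprox, polynomialGaussian, oddTaylorPolynomial, eval_finsetSum, eval_monomial,
    sum_mul]
  refine sum_congr rfl fun k hk ↦ ?_
  have hkn : 2 * k + 1 ≤ 2 * n + 1 := by grind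
  have hcoeff := iteratedDeriv_odd_mul_exp_mul_sq_zero 1 (hg.of_le (mod_cast hkn))
  simp only [one_mul, one_pow] at hcoeff
  rw [hcoeff, mul_assoc, sum_mul, neg_one_mul]

theorem iteratedDeriv_odd_sub_aApprox {s : ℕ} (hs : s ≤ n)
    (hg : ContDiffAt ℝ (2 * n + 1 : ℕ) g 0) :
    iteratedDeriv (2 * s + 1) (g - aApprox g n) 0 = 0 := by
  set f : ℝ → ℝ := g * fun x ↦ exp (x ^ 2)
  have hf : ContDiffAt ℝ (2 * n + 1 : ℕ) f 0 := hg.mul (by fun_prop)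
  set r : ℝ → ℝ := f - fun x ↦ (oddTaylorPolynomial f n).eval x
  have hr : ContDiffAt ℝ (2 * n + 1 : ℕ) r 0 := hf.sub (contDiff_polynomial_eval _).contDiffAt
  have hfactor : g - aApprox g n = r * fun x ↦ exp (-x ^ 2) := by
    funext x
    simp only [aApprox_eq_polynomialGaussian hg, polynomialGaussian, Pi.sub_apply, Pi.mul_apply,
      neg_one_mul, sub_mul, r, f, mul_assoc, ← exp_add, add_neg_cancel, exp_zero, mul_one]
  rw [hfactor, iteratedDeriv_odd_mul_even (hr.of_le (by gcongr)) (by fun_prop)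
    (fun x ↦ by rw [neg_sq])]
  refine sum_eq_zero fun l hl ↦ ?_
  have hln : l ≤ n := by grind
  rw [iteratedDeriv_odd_sub_oddTaylorPolynomial hln (hf.of_le (by gcongr)), mul_zero, zero_mul]

end Approximation

/-- g - a_n(g) is a Schwartz function whose odd derivatives of order
at most 2n+1 vanish at the origin. -/
theorem stmt15 (g : SchwartzMap ℝ ℝ) (n : ℕ) :
    ∃ h : SchwartzMap ℝ ℝ,
      (∀ v : ℝ, h v = g v - aApprox (⇑g) n v) ∧
      (∀ s : ℕ, s ≤ n → iteratedDeriv (2 * s + 1) (⇑h) 0 = 0) := by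
  have hg : ContDiffAt ℝ (2 * n + 1 : ℕ) g 0 := g.contDiffAt (2 * n + 1 : ℕ)
  let a := polynomialGaussianSchwartz one_pos (oddTaylorPolynomial (g * fun x ↦ exp (x ^ 2)) n)
  have ha : ⇑a = aApprox g n := (aApprox_eq_polynomialGaussian hg).symm
  have hsub : ⇑(g - a) = g - aApprox g n := by rw [FunLike.coe_sub, ha]
  exact ⟨g - a, congrFun hsub, fun s hs ↦ hsub ▸ iteratedDeriv_odd_sub_aApprox hs hg⟩
end

section
/- Let r ∈ ℤ_{≥0}, λ > −1/2, and let g be a Schwartz function on ℝ. Then the function F_r^λ(g)(v) = (1/(2^{λ+1} Γ(λ+1))) ∫_ℝ e_{2r+1}(uv,λ) g(u) |u|^{2λ+1} du is infinitely differentiable on ℝ, and its odd derivatives at the origin of order below 2r+1 vanish: ∂^{2s+1} F_r^λ(g)(0) = 0 for every s = 0, 1, …, r−1. -/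
open Real MeasureTheory Finset

/-- Normalized Bessel function j_lambda(v). -/
noncomputable def nbessel (l v : ℝ) : ℝ :=
  Real.Gamma (l + 1) *
    ∑' k : ℕ, (-1 : ℝ) ^ k / (Nat.factorial k * Real.Gamma (k + l + 1)) * (v / 2) ^ (2 * k)

/-- Pochhammer symbol (z)_n = z(z+1)...(z+n-1), with (z)_0 = 1. -/
noncomputable def poch (z : ℝ) (n : ℕ) : ℝ := ∏ i ∈ Finset.range n, (z + i)

/-- The kernel e_{2r+1}(v, lambda). -/
noncomputable def e2r1 (r : ℕ) (l : ℝ) (v : ℝ) : ℂ :=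
  (nbessel l v : ℂ) + Complex.I * (-1 : ℂ) ^ (r + 1) *
    ((v ^ (2 * r + 1) / (2 ^ (2 * r + 1) * poch (l + 1) (2 * r + 1)) : ℝ) : ℂ) *
    (nbessel (l + (2 * r + 1)) v : ℂ)

/-- The non-deformed transform F_r^lambda applied to a function g : ℝ → ℂ. -/
noncomputable def Ftrans (r : ℕ) (l : ℝ) (g : ℝ → ℂ) (v : ℝ) : ℂ :=
  ((1 / (2 ^ (l + 1) * Real.Gamma (l + 1)) : ℝ) : ℂ) *
    ∫ u : ℝ, e2r1 r l (u * v) * g u * ((|u| ^ (2 * l + 1) : ℝ) : ℂ)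

/-!
The Bessel function `j_l` satisfies `j_l' (v) = -v / (2 (l + 1)) * j_{l+1} v`, and for `l ≥ -1/2`
it is bounded by `1`, because the energy `j_l ^ 2 + j_l' ^ 2` decreases on `[0, ∞)`; a contiguous
relation reduces `-1 < l < -1/2` to this case at the cost of a factor growing quadratically. Hence
the Bessel transform of a function with finite moments may be differentiated under the integral
sign, and its derivative is again a Bessel transform, of higher index, so it is smooth. The
transform `F_r^l g` is the sum of such a Bessel transform, which is even, and of `v ^ (2r + 1)`
times another one, whose derivatives of order at most `2r` vanish at the origin.
-/

section Pochhammer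

lemma poch_succ (z : ℝ) (n : ℕ) : poch z (n + 1) = poch z n * (z + n) :=
  Finset.prod_range_succ _ _

lemma poch_succ' (z : ℝ) (n : ℕ) : poch z (n + 1) = z * poch (z + 1) n := by
  simp only [poch, Finset.prod_range_succ', Nat.cast_zero, add_zero, mul_comm z, Nat.cast_succ,
    add_assoc, add_comm (1 : ℝ)]

lemma poch_pos {z : ℝ} (hz : 0 < z) (n : ℕ) : 0 < poch z n :=
  Finset.prod_pos fun _ _ ↦ by positivity

lemma pow_le_poch {z : ℝ} (hz : 0 ≤ z) (n : ℕ) : z ^ n ≤ poch z n := by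
  calc z ^ n = ∏ _i ∈ Finset.range n, z := by simp
    _ ≤ poch z n := Finset.prod_le_prod (fun _ _ ↦ hz) fun i _ ↦ by simp

lemma Gamma_nat_add_eq_poch_mul_Gamma {z : ℝ} (hz : ∀ m : ℕ, z ≠ -m) (n : ℕ) :
    Real.Gamma (n + z) = poch z n * Real.Gamma z := by
  induction n with
  | zero => simp [poch]
  | succ n ih =>
    have hne : n + z ≠ 0 := fun h ↦ hz n (by linarith)
    rw [Nat.cast_succ, add_right_comm, Real.Gamma_add_one hne, ih, poch_succ]
    ring

end Pochhammer

section PowerSeries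

variable {𝕜 : Type*} [RCLike 𝕜] {a : ℕ → 𝕜} {C : ℝ}

lemma summable_mul_pow_of_norm_le_pow_div_factorial (ha : ∀ k, ‖a k‖ ≤ C ^ k / k.factorial)
    (x : 𝕜) : Summable fun k ↦ a k * x ^ k := by
  refine .of_norm_bounded (Real.summable_pow_div_factorial (C * ‖x‖)) fun k ↦ ?_
  rw [norm_mul, norm_pow, mul_pow, mul_div_right_comm]
  gcongr
  exact ha k

lemma norm_succ_mul_mul_pow_le_of_norm_le_pow_div_factorial
    (ha : ∀ k, ‖a k‖ ≤ C ^ k / k.factorial) {x : 𝕜} {R : ℝ} (hx : ‖x‖ ≤ R) (k : ℕ) :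
    ‖(k + 1) * a (k + 1) * x ^ k‖ ≤ C * ((C * R) ^ k / k.factorial) := by
  have hk : ‖(k + 1 : 𝕜)‖ = k + 1 := by exact_mod_cast RCLike.norm_natCast (K := 𝕜) (k + 1)
  calc ‖(k + 1) * a (k + 1) * x ^ k‖
      = (k + 1) * ‖a (k + 1)‖ * ‖x‖ ^ k := by rw [norm_mul, norm_mul, norm_pow, hk]
    _ ≤ (k + 1) * (C ^ (k + 1) / (k + 1).factorial) * R ^ k := by
      gcongr
      · exact mul_nonneg (by positivity) ((norm_nonneg _).trans (ha (k + 1)))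
      · exact ha (k + 1)
    _ = C * ((C * R) ^ k / k.factorial) := by
      rw [Nat.factorial_succ, mul_pow]
      push_cast
      field_simp
      ring

lemma hasDerivAt_tsum_mul_pow_of_norm_le_pow_div_factorial
    (ha : ∀ k, ‖a k‖ ≤ C ^ k / k.factorial) (x : 𝕜) :
    HasDerivAt (fun x ↦ ∑' k, a k * x ^ k) (∑' k : ℕ, (k + 1) * a (k + 1) * x ^ k) x := by
  have hsum := summable_mul_pow_of_norm_le_pow_div_factorial ha
  have hterm (k : ℕ) (y : 𝕜) :
      HasDerivAt (fun y ↦ a (k + 1) * y ^ (k + 1)) ((k + 1) * a (k + 1) * y ^ k) y := by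
    refine ((hasDerivAt_pow (k + 1) y).const_mul (a (k + 1))).congr_deriv ?_
    push_cast
    ring
  have hx : x ∈ Metric.ball (0 : 𝕜) (‖x‖ + 1) := by simp
  have hconn : IsPreconnected (Metric.ball (0 : 𝕜) (‖x‖ + 1)) := Metric.isPreconnected_ball
  have hbound (k : ℕ) (y : 𝕜) (hy : y ∈ Metric.ball 0 (‖x‖ + 1)) :
      ‖(k + 1) * a (k + 1) * y ^ k‖ ≤ C * ((C * (‖x‖ + 1)) ^ k / k.factorial) :=
    norm_succ_mul_mul_pow_le_of_norm_le_pow_div_factorial ha (mem_ball_zero_iff.1 hy).le k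
  have hmajorant : Summable fun k : ℕ ↦ C * ((C * (‖x‖ + 1)) ^ k / k.factorial) :=
    (Real.summable_pow_div_factorial _).mul_left C
  have hsummable : Summable fun k ↦ a (k + 1) * x ^ (k + 1) :=
    (hsum x).comp_injective (add_left_injective 1)
  have htail : HasDerivAt (fun y ↦ ∑' k, a (k + 1) * y ^ (k + 1))
      (∑' k : ℕ, (k + 1) * a (k + 1) * x ^ k) x :=
    hasDerivAt_tsum_of_isPreconnected hmajorant Metric.isOpen_ball hconn
      (fun k y _ ↦ hterm k y) hbound hx hsummable hx
  have hshift : (fun y ↦ ∑' k, a k * y ^ k) = fun y ↦ a 0 + ∑' k, a (k + 1) * y ^ (k + 1) :=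
    funext fun y ↦ by rw [(hsum y).tsum_eq_zero_add, pow_zero, mul_one]
  rw [hshift]
  exact htail.const_add (a 0)

end PowerSeries

section BesselSeries

variable {l : ℝ}

/-- The coefficient of `((v / 2) ^ 2) ^ k` in the normalized Bessel function `j_l v`. -/
noncomputable def besselCoeff (l : ℝ) (k : ℕ) : ℝ :=
  (-1) ^ k / (k.factorial * poch (l + 1) k)

/-- The entire function whose value at `(v / 2) ^ 2` is `j_l v`, that is, the hypergeometric
series `₀F₁(; l + 1; -x)`. -/
noncomputable def besselSeries (l x : ℝ) : ℝ := ∑' k, besselCoeff l k * x ^ k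

lemma besselCoeff_zero (l : ℝ) : besselCoeff l 0 = 1 := by
  simp [besselCoeff, poch]

lemma norm_besselCoeff_le (hl : -1 < l) (k : ℕ) :
    ‖besselCoeff l k‖ ≤ (l + 1)⁻¹ ^ k / k.factorial := by
  have hl1 : 0 < l + 1 := by linarith
  rw [besselCoeff, norm_div, norm_pow, norm_neg, norm_one, one_pow, Real.norm_of_nonneg
    (mul_nonneg k.factorial.cast_nonneg (poch_pos hl1 k).le), inv_pow, ← one_div, div_div,
    mul_comm (_ ^ k)]
  gcongr
  exact pow_le_poch hl1.le k

lemma succ_mul_besselCoeff_succ (l : ℝ) (k : ℕ) :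
    (k + 1) * besselCoeff l (k + 1) = -(1 / (l + 1)) * besselCoeff (l + 1) k := by
  rw [besselCoeff, besselCoeff, poch_succ', Nat.factorial_succ]
  push_cast
  field_simp
  ring

lemma besselCoeff_succ_sub (hl : -1 < l) (k : ℕ) :
    besselCoeff l (k + 1) - besselCoeff (l + 1) (k + 1) =
      -(1 / ((l + 1) * (l + 2))) * besselCoeff (l + 2) k := by
  have hl1 : 0 < l + 1 := by linarith
  have hl2 : 0 < l + 2 := by linarith
  have hpos := poch_pos hl2 k
  have hpoch : poch (l + 2 + 1) k = poch (l + 2) k * (l + 2 + k) / (l + 2) := by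
    rw [eq_div_iff hl2.ne', mul_comm, ← poch_succ', poch_succ]
  rw [besselCoeff, besselCoeff, besselCoeff, poch_succ' (l + 1), poch_succ (l + 1 + 1),
    show l + 1 + 1 = l + 2 by ring, hpoch, Nat.factorial_succ]
  push_cast
  field_simp
  ring

lemma nbessel_eq_besselSeries (hl : -1 < l) (v : ℝ) :
    nbessel l v = besselSeries l ((v / 2) ^ 2) := by
  have hl1 : 0 < l + 1 := by linarith
  have hGamma : Real.Gamma (l + 1) ≠ 0 := (Real.Gamma_pos_of_pos hl1).ne'
  have hpole (m : ℕ) : l + 1 ≠ -m := by linarith [m.cast_nonneg (α := ℝ)]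
  rw [nbessel, besselSeries, ← tsum_mul_left]
  refine tsum_congr fun k ↦ ?_
  rw [besselCoeff, add_assoc, Gamma_nat_add_eq_poch_mul_Gamma hpole, pow_mul]
  field_simp

lemma summable_besselCoeff_mul_pow (hl : -1 < l) (x : ℝ) :
    Summable fun k ↦ besselCoeff l k * x ^ k :=
  summable_mul_pow_of_norm_le_pow_div_factorial (norm_besselCoeff_le hl) x

lemma hasDerivAt_besselSeries (hl : -1 < l) (x : ℝ) :
    HasDerivAt (besselSeries l) (-(1 / (l + 1)) * besselSeries (l + 1) x) x := by
  refine (hasDerivAt_tsum_mul_pow_of_norm_le_pow_div_factorial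
    (norm_besselCoeff_le hl) x).congr_deriv ?_
  simp only [succ_mul_besselCoeff_succ, mul_assoc, tsum_mul_left, besselSeries]

lemma besselSeries_sub_besselSeries_add_one (hl : -1 < l) (x : ℝ) :
    besselSeries l x - besselSeries (l + 1) x =
      -(x / ((l + 1) * (l + 2))) * besselSeries (l + 2) x := by
  have hsum := summable_besselCoeff_mul_pow hl x
  have hsum' := summable_besselCoeff_mul_pow (show -1 < l + 1 by linarith) x
  rw [besselSeries, besselSeries, ← hsum.tsum_sub hsum', (hsum.sub hsum').tsum_eq_zero_add,
    besselSeries, ← tsum_mul_left]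
  simp only [besselCoeff_zero, sub_self, zero_add, ← sub_mul, besselCoeff_succ_sub hl]
  exact tsum_congr fun k ↦ by ring

end BesselSeries

section NormalizedBessel

variable {l : ℝ}

lemma nbessel_neg (l v : ℝ) : nbessel l (-v) = nbessel l v := by
  simp only [nbessel, neg_div, (even_two_mul _).neg_pow]

lemma nbessel_zero (hl : -1 < l) : nbessel l 0 = 1 := by
  rw [nbessel_eq_besselSeries hl, besselSeries, tsum_eq_single 0 fun k hk ↦ by simp [hk]]
  simp [besselCoeff_zero]

lemma hasDerivAt_nbessel (hl : -1 < l) (v : ℝ) :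
    HasDerivAt (nbessel l) (-(v / (2 * (l + 1)) * nbessel (l + 1) v)) v := by
  have hsq : HasDerivAt (fun v : ℝ ↦ (v / 2) ^ 2) (v / 2) v := by
    refine (((hasDerivAt_id' v).div_const 2).fun_pow 2).congr_deriv ?_
    push_cast
    ring
  rw [nbessel_eq_besselSeries (by linarith), funext (nbessel_eq_besselSeries hl)]
  refine ((hasDerivAt_besselSeries hl _).comp v hsq).congr_deriv ?_
  have hl1 : l + 1 ≠ 0 := by linarith
  field_simp

lemma continuous_nbessel (hl : -1 < l) : Continuous (nbessel l) :=
  continuous_iff_continuousAt.2 fun v ↦ (hasDerivAt_nbessel hl v).continuousAt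

lemma nbessel_sub_nbessel_add_one (hl : -1 < l) (v : ℝ) :
    nbessel l v - nbessel (l + 1) v =
      -(v ^ 2 / (4 * (l + 1) * (l + 2)) * nbessel (l + 2) v) := by
  rw [nbessel_eq_besselSeries hl, nbessel_eq_besselSeries (by linarith),
    nbessel_eq_besselSeries (by linarith), besselSeries_sub_besselSeries_add_one hl]
  have hl1 : l + 1 ≠ 0 := by linarith
  have hl2 : l + 2 ≠ 0 := by linarith
  field_simp
  ring

/-- By `hasDerivAt_nbessel` the differentiated function is `-j_l'`, so this is Bessel's equation
`j_l'' + (2l + 1) / v * j_l' + j_l = 0`. -/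
lemma hasDerivAt_mul_nbessel_add_one (hl : -1 < l) (v : ℝ) :
    HasDerivAt (fun v ↦ v / (2 * (l + 1)) * nbessel (l + 1) v)
      (nbessel l v - (2 * l + 1) / (2 * (l + 1)) * nbessel (l + 1) v) v := by
  have hl1 : l + 1 ≠ 0 := by linarith
  have hl2 : l + 2 ≠ 0 := by linarith
  refine (((hasDerivAt_id' v).div_const (2 * (l + 1))).mul
    (hasDerivAt_nbessel (l := l + 1) (by linarith) v)).congr_deriv ?_
  rw [show l + 1 + 1 = l + 2 by ring, eq_add_of_sub_eq (nbessel_sub_nbessel_add_one hl v)]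
  field_simp
  ring

lemma hasDerivAt_nbessel_energy (hl : -1 < l) (v : ℝ) :
    HasDerivAt (fun v ↦ nbessel l v ^ 2 + (v / (2 * (l + 1)) * nbessel (l + 1) v) ^ 2)
      (-(2 * (2 * l + 1) * v * (nbessel (l + 1) v / (2 * (l + 1))) ^ 2)) v := by
  refine (((hasDerivAt_nbessel hl v).fun_pow 2).add
    ((hasDerivAt_mul_nbessel_add_one hl v).fun_pow 2)).congr_deriv ?_
  push_cast
  ring

lemma antitoneOn_nbessel_energy (hl : -(1 / 2) ≤ l) :
    AntitoneOn (fun v ↦ nbessel l v ^ 2 + (v / (2 * (l + 1)) * nbessel (l + 1) v) ^ 2)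
      (Set.Ici 0) := by
  have hderiv := hasDerivAt_nbessel_energy (show -1 < l by linarith)
  refine antitoneOn_of_hasDerivWithinAt_nonpos (convex_Ici 0)
    (fun v _ ↦ (hderiv v).continuousAt.continuousWithinAt)
    (fun v _ ↦ (hderiv v).hasDerivWithinAt) fun v hv ↦ neg_nonpos.2 ?_
  have hv : 0 < v := by simpa using hv
  have hl' : 0 ≤ 2 * l + 1 := by linarith
  positivity

lemma abs_nbessel_le_one (hl : -(1 / 2) ≤ l) (v : ℝ) : |nbessel l v| ≤ 1 := by
  wlog hv : 0 ≤ v generalizing v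
  · rw [← nbessel_neg]
    exact this (-v) (by linarith)
  rw [← sq_le_one_iff_abs_le_one]
  calc nbessel l v ^ 2
      ≤ nbessel l v ^ 2 + (v / (2 * (l + 1)) * nbessel (l + 1) v) ^ 2 := by
        linarith [sq_nonneg (v / (2 * (l + 1)) * nbessel (l + 1) v)]
    _ ≤ nbessel l 0 ^ 2 + (0 / (2 * (l + 1)) * nbessel (l + 1) 0) ^ 2 :=
        antitoneOn_nbessel_energy hl Set.self_mem_Ici hv hv
    _ = 1 := by simp [nbessel_zero (show -1 < l by linarith)]

lemma abs_nbessel_le_one_add_sq (hl : -1 < l) (v : ℝ) :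
    |nbessel l v| ≤ 1 + v ^ 2 / (4 * (l + 1) * (l + 2)) := by
  have hl1 : 0 < l + 1 := by linarith
  have hl2 : 0 < l + 2 := by linarith
  rw [eq_add_of_sub_eq' (nbessel_sub_nbessel_add_one hl v)]
  refine (abs_add_le _ _).trans (add_le_add (abs_nbessel_le_one (by linarith) v) ?_)
  rw [abs_neg, abs_mul, abs_of_nonneg (by positivity)]
  exact mul_le_of_le_one_right (by positivity) (abs_nbessel_le_one (by linarith) v)

end NormalizedBessel

section BesselTransform

variable {l : ℝ} {E : Type*} [NormedAddCommGroup E] [NormedSpace ℝ E] {μ : Measure ℝ} {h : ℝ → E}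

/-- The Bessel (Hankel) transform of `h` of index `l`. The customary weight `|u| ^ (2 * l + 1)` is
not built in: it is part of `μ` or of `h`. -/
noncomputable def besselTransform (l : ℝ) (μ : Measure ℝ) (h : ℝ → E) (v : ℝ) : E :=
  ∫ u, nbessel l (u * v) • h u ∂μ

lemma besselTransform_neg (l : ℝ) (μ : Measure ℝ) (h : ℝ → E) (v : ℝ) :
    besselTransform l μ h (-v) = besselTransform l μ h v := by
  simp only [besselTransform, mul_neg, nbessel_neg]

lemma integrable_nbessel_smul (hl : -1 < l) (hh : Integrable h μ)
    (hh2 : Integrable (fun u ↦ u ^ 2 • h u) μ) (v : ℝ) :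
    Integrable (fun u ↦ nbessel l (u * v) • h u) μ := by
  have hcont : Continuous fun u ↦ nbessel l (u * v) :=
    (continuous_nbessel hl).comp (continuous_mul_const v)
  refine (hh.norm.add (hh2.norm.const_mul (v ^ 2 / (4 * (l + 1) * (l + 2))))).mono'
    (hcont.aestronglyMeasurable.smul hh.1) (.of_forall fun u ↦ ?_)
  calc ‖nbessel l (u * v) • h u‖
      ≤ (1 + (u * v) ^ 2 / (4 * (l + 1) * (l + 2))) * ‖h u‖ := by
        rw [norm_smul]
        gcongr
        exact abs_nbessel_le_one_add_sq hl _
    _ = ‖h u‖ + v ^ 2 / (4 * (l + 1) * (l + 2)) * ‖u ^ 2 • h u‖ := by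
        rw [norm_smul, norm_pow, Real.norm_eq_abs, sq_abs]
        ring

lemma hasDerivAt_besselTransform (hl : -1 < l) (hh : Integrable h μ)
    (hh2 : Integrable (fun u ↦ u ^ 2 • h u) μ) (v : ℝ) :
    HasDerivAt (besselTransform l μ h)
      (-(v / (2 * (l + 1))) • besselTransform (l + 1) μ (fun u ↦ u ^ 2 • h u) v) v := by
  have hl1 : 0 < l + 1 := by linarith
  have hint := integrable_nbessel_smul hl hh hh2
  have hmeas : AEStronglyMeasurable (fun u ↦ nbessel (l + 1) (u * v) • u ^ 2 • h u) μ :=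
    ((continuous_nbessel (by linarith)).comp
      (continuous_mul_const v)).aestronglyMeasurable.smul hh2.1
  have hderiv (u w : ℝ) : HasDerivAt (fun w ↦ nbessel l (u * w) • h u)
      (-(w / (2 * (l + 1))) • nbessel (l + 1) (u * w) • u ^ 2 • h u) w := by
    have hlin : HasDerivAt (u * ·) u w := by simpa using (hasDerivAt_id' w).const_mul u
    refine (((hasDerivAt_nbessel hl (u * w)).comp w hlin).smul_const (h u)).congr_deriv ?_
    simp only [smul_smul]
    congr 1
    ring
  have hbound (u w : ℝ) (hw : w ∈ Metric.ball v 1) :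
      ‖-(w / (2 * (l + 1))) • nbessel (l + 1) (u * w) • u ^ 2 • h u‖ ≤
        (|v| + 1) / (2 * (l + 1)) * ‖u ^ 2 • h u‖ := by
    have hw' : |w| ≤ |v| + 1 := by
      linarith [abs_sub_abs_le_abs_sub w v, Real.dist_eq w v ▸ Metric.mem_ball.1 hw]
    rw [norm_smul, norm_smul, norm_neg, norm_div, Real.norm_eq_abs, Real.norm_eq_abs,
      Real.norm_eq_abs, abs_of_pos (by linarith : 0 < 2 * (l + 1))]
    gcongr
    exact mul_le_of_le_one_left (norm_nonneg _) (abs_nbessel_le_one (by linarith) _)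
  rw [besselTransform, ← integral_smul]
  exact (hasDerivAt_integral_of_dominated_loc_of_deriv_le (Metric.ball_mem_nhds v one_pos)
    (.of_forall fun w ↦ (hint w).1) (hint v) (hmeas.const_smul _)
    (.of_forall hbound) (hh2.norm.const_mul _) (.of_forall fun u w _ ↦ hderiv u w)).2

lemma integrable_pow_smul_pow_smul (hh : ∀ k : ℕ, Integrable (fun u ↦ u ^ k • h u) μ) (m k : ℕ) :
    Integrable (fun u ↦ u ^ k • u ^ m • h u) μ := by
  simpa only [smul_smul, ← pow_add] using hh (k + m)

lemma contDiff_besselTransform (hl : -1 < l) (hh : ∀ k : ℕ, Integrable (fun u ↦ u ^ k • h u) μ) :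
    ContDiff ℝ (⊤ : ℕ∞) (besselTransform l μ h) := by
  refine contDiff_infty.2 fun n ↦ ?_
  induction n generalizing l h with
  | zero =>
    exact contDiff_zero.2 <| continuous_iff_continuousAt.2 fun v ↦
      (hasDerivAt_besselTransform hl (by simpa using hh 0) (hh 2) v).continuousAt
  | succ n ih =>
    have hderiv := hasDerivAt_besselTransform hl (by simpa using hh 0) (hh 2)
    push_cast
    refine contDiff_succ_iff_deriv.2 ⟨fun v ↦ (hderiv v).differentiableAt, by simp, ?_⟩
    rw [funext fun v ↦ (hderiv v).deriv]
    exact (contDiff_id.div_const _).neg.smul (ih (by linarith) (integrable_pow_smul_pow_smul hh 2))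

end BesselTransform

section IteratedDeriv

variable {𝕜 : Type*} [NontriviallyNormedField 𝕜] {F : Type*} [NormedAddCommGroup F]
  [NormedSpace 𝕜 F] {n m : ℕ}

lemma iteratedDeriv_zero_of_even_of_odd_s17 [NeZero (2 : 𝕜)] {f : 𝕜 → F} (hf : f.Even) (hn : Odd n) :
    iteratedDeriv n f 0 = 0 := by
  have hneg := iteratedDeriv_comp_neg n f 0
  simp only [hf _, neg_zero, hn.neg_one_pow, neg_smul, one_smul] at hneg
  have htwo : (2 : 𝕜) • iteratedDeriv n f 0 = 0 := by
    rw [two_smul, ← eq_neg_iff_add_eq_zero, ← hneg]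
  exact (smul_eq_zero.1 htwo).resolve_left two_ne_zero

lemma iteratedDeriv_pow_smul_zero_of_lt {f : 𝕜 → F} (hf : ContDiff 𝕜 n f) (hnm : n < m) :
    iteratedDeriv n (fun v ↦ v ^ m • f v) 0 = 0 := by
  induction n generalizing m f with
  | zero => simp [hnm.ne']
  | succ n ih =>
    obtain ⟨m, rfl⟩ : ∃ m', m = m' + 1 := ⟨m - 1, by lia⟩
    push_cast at hf
    obtain ⟨hdiff, -, hf'⟩ := contDiff_succ_iff_deriv.1 hf
    have hderiv : deriv (fun v ↦ v ^ (m + 1) • f v) =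
        fun v ↦ v ^ m • ((m + 1 : 𝕜) • f v + v • deriv f v) := by
      funext v
      rw [((hasDerivAt_pow (m + 1) v).fun_smul (hdiff v).hasDerivAt).deriv]
      push_cast
      module
    rw [iteratedDeriv_succ', hderiv]
    exact ih (((hf.of_le le_self_add).const_smul _).add (contDiff_id.smul hf')) (by lia)

end IteratedDeriv

lemma integrable_norm_rpow_smul_schwartz {E F : Type*} [NormedAddCommGroup E] [NormedSpace ℝ E]
    [FiniteDimensional ℝ E] [Nontrivial E] [MeasurableSpace E] [BorelSpace E]
    [NormedAddCommGroup F] [NormedSpace ℝ F] (μ : Measure E) [μ.IsAddHaarMeasure]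
    (g : SchwartzMap E F) {a : ℝ} (ha : -Module.finrank ℝ E < a) :
    Integrable (fun u ↦ ‖u‖ ^ a • g u) μ := by
  obtain ⟨N, hN⟩ := exists_nat_ge a
  have hmeas : AEStronglyMeasurable (fun u ↦ ‖u‖ ^ a • g u) μ :=
    (measurable_norm.pow_const a).aestronglyMeasurable.smul g.continuous.aestronglyMeasurable
  have hnear : IntegrableOn (fun u ↦ ‖u‖ ^ a • g u) (Metric.ball 0 1) μ := by
    refine integrableOn_ball_of_norm_le_rpow (α := -a) (C := SchwartzMap.seminorm ℝ 0 0 g)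
      Module.finrank_pos (by linarith) (.of_forall fun u ↦ ?_) hmeas
    rw [norm_smul, neg_neg, Real.norm_of_nonneg (by positivity), mul_comm]
    gcongr
    exact g.norm_le_seminorm ℝ u
  have hfar : IntegrableOn (fun u ↦ ‖u‖ ^ a • g u) (Metric.ball 0 1)ᶜ μ := by
    refine (g.integrable_pow_mul μ N).integrableOn.mono' hmeas.restrict
      ((ae_restrict_mem measurableSet_ball.compl).mono fun u hu ↦ ?_)
    have hu : 1 ≤ ‖u‖ := by simpa using hu
    rw [norm_smul, Real.norm_of_nonneg (by positivity), ← Real.rpow_natCast]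
    gcongr
  simpa using hnear.union hfar

lemma integrable_pow_smul_abs_rpow_smul_schwartz {F : Type*} [NormedAddCommGroup F]
    [NormedSpace ℝ F] (g : SchwartzMap ℝ F) {a : ℝ} (ha : -1 < a) (k : ℕ) :
    Integrable fun u : ℝ ↦ u ^ k • |u| ^ a • g u := by
  have hint (b : ℝ) (hb : -1 < b) : Integrable fun u : ℝ ↦ |u| ^ b • g u :=
    integrable_norm_rpow_smul_schwartz volume g (by simpa using hb)
  refine (hint (k + a) (by linarith [k.cast_nonneg (α := ℝ)])).mono
    ((continuous_pow k).aestronglyMeasurable.smul (hint a ha).1) (.of_forall fun u ↦ ?_)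
  rw [smul_smul, norm_smul, norm_smul, norm_mul, norm_pow, Real.norm_eq_abs,
    Real.norm_of_nonneg (by positivity), Real.norm_of_nonneg (by positivity), ← Real.rpow_natCast]
  gcongr
  exact Real.le_rpow_add (abs_nonneg u) k a

section Transform

variable {l : ℝ} {μ : Measure ℝ} {h : ℝ → ℂ}

lemma e2r1_eq (r : ℕ) (l v : ℝ) :
    e2r1 r l v = nbessel l v +
      Complex.I * (-1) ^ (r + 1) / (2 ^ (2 * r + 1) * poch (l + 1) (2 * r + 1) : ℝ) *
        v ^ (2 * r + 1) * nbessel (l + (2 * r + 1)) v := by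
  rw [e2r1]
  push_cast
  ring

lemma integral_e2r1_mul (r : ℕ) (hl : -1 < l)
    (hh : ∀ k : ℕ, Integrable (fun u ↦ u ^ k • h u) μ) (v : ℝ) :
    ∫ u, e2r1 r l (u * v) * h u ∂μ = besselTransform l μ h v +
      Complex.I * (-1) ^ (r + 1) / (2 ^ (2 * r + 1) * poch (l + 1) (2 * r + 1) : ℝ) *
        v ^ (2 * r + 1) •
          besselTransform (l + (2 * r + 1)) μ (fun u ↦ u ^ (2 * r + 1) • h u) v := by
  have hmoments := integrable_pow_smul_pow_smul hh (2 * r + 1)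
  have hlr : -1 < l + (2 * r + 1) := by linarith [r.cast_nonneg (α := ℝ)]
  have heven := integrable_nbessel_smul hl (by simpa using hh 0) (hh 2) v
  have hodd := integrable_nbessel_smul hlr (by simpa using hmoments 0) (hmoments 2) v
  rw [besselTransform, besselTransform, ← integral_smul, ← integral_const_mul,
    ← integral_add heven ((hodd.fun_smul _).const_mul _)]
  refine integral_congr_ae (.of_forall fun u ↦ ?_)
  simp only [e2r1_eq, Complex.real_smul, Complex.ofReal_pow, Complex.ofReal_mul]
  ring

lemma Ftrans_eq_smul_integral_e2r1_mul (r : ℕ) (l : ℝ) (g : ℝ → ℂ) (v : ℝ) :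
    Ftrans r l g v = (1 / (2 ^ (l + 1) * Real.Gamma (l + 1))) •
      ∫ u, e2r1 r l (u * v) * |u| ^ (2 * l + 1) • g u := by
  simp only [Ftrans, mul_assoc, mul_comm (g _), Complex.real_smul]

end Transform

theorem stmt17_general (r : ℕ) {l : ℝ} (hl : -1 < l) {g : ℝ → ℂ}
    (hg : ∀ k : ℕ, Integrable fun u : ℝ ↦ u ^ k • |u| ^ (2 * l + 1) • g u) :
    ContDiff ℝ (⊤ : ℕ∞) (Ftrans r l g) ∧
    ∀ s : ℕ, s < r → iteratedDeriv (2 * s + 1) (Ftrans r l g) 0 = 0 := by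
  have hlr : -1 < l + (2 * r + 1) := by linarith [r.cast_nonneg (α := ℝ)]
  have heven := contDiff_besselTransform hl hg
  have hodd := contDiff_besselTransform hlr (integrable_pow_smul_pow_smul hg (2 * r + 1))
  have hodd' (c : ℂ) : ContDiff ℝ (⊤ : ℕ∞) fun v : ℝ ↦ c * v ^ (2 * r + 1) • besselTransform
      (l + (2 * r + 1)) volume (fun u ↦ u ^ (2 * r + 1) • |u| ^ (2 * l + 1) • g u) v :=
    contDiff_const.mul ((contDiff_id.pow (2 * r + 1)).smul hodd)
  simp only [funext (Ftrans_eq_smul_integral_e2r1_mul r l g), integral_e2r1_mul r hl hg]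
  refine ⟨(heven.add (hodd' _)).const_smul _, fun s hs ↦ ?_⟩
  rw [iteratedDeriv_fun_const_smul_field, iteratedDeriv_fun_add
    (contDiff_infty.1 heven _).contDiffAt (contDiff_infty.1 (hodd' _) _).contDiffAt,
    iteratedDeriv_const_mul_field,
    iteratedDeriv_zero_of_even_of_odd_s17 (besselTransform_neg _ _ _) (odd_two_mul_add_one s),
    iteratedDeriv_pow_smul_zero_of_lt (contDiff_infty.1 hodd _) (by lia), mul_zero, add_zero,
    smul_zero]

/-- for a Schwartz function g, F_r^lambda(g) is infinitely differentiable
and its odd derivatives of order below 2r+1 vanish at the origin. -/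
theorem stmt17 (r : ℕ) (l : ℝ) (hl : -(1 / 2 : ℝ) < l) (g : SchwartzMap ℝ ℂ) :
    ContDiff ℝ (⊤ : ℕ∞) (Ftrans r l ⇑g) ∧
    ∀ s : ℕ, s < r → iteratedDeriv (2 * s + 1) (Ftrans r l ⇑g) 0 = 0 :=
  stmt17_general r (by linarith) (integrable_pow_smul_abs_rpow_smul_schwartz g (by linarith))
end

section
/- Let r ∈ ℤ_{≥0} and λ > −1/2. The image of S_r(ℝ) under the transform F_r^λ equals S_r(ℝ): every g ∈ S_r(ℝ) satisfies F_r^λ(g) ∈ S_r(ℝ), and every h ∈ S_r(ℝ) equals F_r^λ(g) for some g ∈ S_r(ℝ). -/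
open Real MeasureTheory Finset

/-- g belongs to S_n(ℝ): a Schwartz function whose odd derivatives of order
2s+1 for s < n vanish at the origin. -/
def InSn (n : ℕ) (g : SchwartzMap ℝ ℂ) : Prop :=
  ∀ s : ℕ, s < n → iteratedDeriv (2 * s + 1) (⇑g) 0 = 0

/-!
The Hankel transform `H m` of order `m > -1` is an involution of the space of even Schwartz
functions. It satisfies `(H m f)' = -v · H (m + 1) f`, which gives smoothness, and, integrating by
parts, `H (m + 1) (f' / u) = -H m f`, which gives decay. Consequently `H m ∘ H m` commutes with
multiplication by `u ^ 2`. It also fixes the Gaussian, and subtracting from an even `f` a multiple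
of the Gaussian with the same value at `a` leaves a multiple of `u ^ 2 - a ^ 2`; so
`H m (H m f) a = f a`.

The elements of `S_r` are the functions `a + x ^ (2r + 1) b` with `a` and `b` even and Schwartz. The
transform `F` acts on the two parts by `a ↦ H l a` and `b ↦ κ H (l + 2r + 1) b`, where
`κ = i (-1) ^ (r + 1)`. Hence `F` preserves `S_r`, and since `κ ^ 2 = -1` its square is the
reflection `g ↦ g (-·)`, so `F` is onto.
-/

open Filter Asymptotics
open scoped ContDiff SchwartzMap

/-! ### Schwartz functions on the line -/

section SchwartzFunctions

variable {E : Type*} [NormedAddCommGroup E] [NormedSpace ℝ E] {f g : ℝ → E}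

/-- Functions decaying faster than any power, the growth condition of the Schwartz space. Being
`O` along `⊤` means bounded on the whole line. -/
def RapidDecay (f : ℝ → E) : Prop :=
  ∀ k : ℕ, (fun x => x ^ k • f x) =O[⊤] fun _ => (1 : ℝ)

theorem rapidDecay_iff : RapidDecay f ↔ ∀ k : ℕ, ∃ C, ∀ x, |x| ^ k * ‖f x‖ ≤ C := by
  simp only [RapidDecay, isBigO_top, norm_smul, norm_pow, norm_eq_abs, norm_one,
    mul_one]

theorem RapidDecay.add (hf : RapidDecay f) (hg : RapidDecay g) :
    RapidDecay fun x => f x + g x := fun k => by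
  simpa only [smul_add] using (hf k).add (hg k)

theorem RapidDecay.const_smul (hf : RapidDecay f) (c : ℝ) : RapidDecay fun x => c • f x :=
  fun k => by simpa only [smul_comm _ c, Pi.smul_def] using (hf k).const_smul_left c

theorem RapidDecay.neg (hf : RapidDecay f) : RapidDecay fun x => -f x :=
  fun k => by simpa only [smul_neg] using (hf k).neg_left

theorem RapidDecay.sub (hf : RapidDecay f) (hg : RapidDecay g) :
    RapidDecay fun x => f x - g x := fun k => by
  simpa only [smul_sub] using (hf k).sub (hg k)

theorem RapidDecay.id_smul (hf : RapidDecay f) : RapidDecay fun x => x • f x :=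
  fun k => by simpa only [smul_smul, ← pow_succ] using hf (k + 1)

theorem RapidDecay.of_sub_smul {a : ℝ} (hf : Continuous f)
    (h : RapidDecay fun x => (x - a) • f x) : RapidDecay f := by
  refine rapidDecay_iff.2 fun k => ?_
  obtain ⟨C, hC⟩ := rapidDecay_iff.1 h k
  obtain ⟨B, hB⟩ := (isCompact_Icc (a := a - 1) (b := a + 1)).exists_bound_of_continuousOn
    (f := fun x => x ^ k • f x) (by fun_prop)
  refine ⟨max B C, fun x => ?_⟩
  by_cases hx : x ∈ Set.Icc (a - 1) (a + 1)
  · simpa [norm_smul] using (hB x hx).trans (le_max_left B C)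
  · have hxa : 1 ≤ |x - a| := by
      by_contra! hlt
      rw [abs_lt] at hlt
      exact hx ⟨by linarith, by linarith⟩
    calc |x| ^ k * ‖f x‖ ≤ |x| ^ k * (|x - a| * ‖f x‖) := by
          gcongr; exact le_mul_of_one_le_left (norm_nonneg _) hxa
      _ ≤ max B C := by simpa [norm_smul] using (hC x).trans (le_max_right B C)

/-- The functions underlying elements of `𝓢(ℝ, E)`: a predicate lets one multiply, divide and
integrate Schwartz functions without bundling each result. -/
def IsSchwartz (f : ℝ → E) : Prop := ∃ g : 𝓢(ℝ, E), ⇑g = f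

theorem isSchwartz_iff :
    IsSchwartz f ↔ ContDiff ℝ ∞ f ∧ ∀ n, RapidDecay (iteratedDeriv n f) := by
  constructor
  · rintro ⟨g, rfl⟩
    refine ⟨g.smooth ⊤, fun n => rapidDecay_iff.2 fun k => ?_⟩
    obtain ⟨C, -, hC⟩ := g.decay k n
    exact ⟨C, fun x => by
      simpa only [norm_iteratedFDeriv_eq_norm_iteratedDeriv, norm_eq_abs] using hC x⟩
  · rintro ⟨hf, hd⟩
    refine ⟨⟨f, hf, fun k n => ?_⟩, rfl⟩
    simpa only [norm_iteratedFDeriv_eq_norm_iteratedDeriv, norm_eq_abs] using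
      rapidDecay_iff.1 (hd n) k

namespace IsSchwartz

theorem contDiff (hf : IsSchwartz f) : ContDiff ℝ ∞ f := (isSchwartz_iff.1 hf).1

theorem continuous (hf : IsSchwartz f) : Continuous f := hf.contDiff.continuous

theorem differentiable (hf : IsSchwartz f) : Differentiable ℝ f :=
  hf.contDiff.differentiable (by simp)

theorem rapidDecay (hf : IsSchwartz f) : RapidDecay f := (isSchwartz_iff.1 hf).2 0

theorem add (hf : IsSchwartz f) (hg : IsSchwartz g) : IsSchwartz fun x => f x + g x := by
  obtain ⟨f, rfl⟩ := hf
  obtain ⟨g, rfl⟩ := hg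
  exact ⟨f + g, rfl⟩

theorem sub (hf : IsSchwartz f) (hg : IsSchwartz g) : IsSchwartz fun x => f x - g x := by
  obtain ⟨f, rfl⟩ := hf
  obtain ⟨g, rfl⟩ := hg
  exact ⟨f - g, rfl⟩

theorem const_smul {𝕜 : Type*} [NormedField 𝕜] [NormedSpace 𝕜 E] [SMulCommClass ℝ 𝕜 E]
    (hf : IsSchwartz f) (c : 𝕜) : IsSchwartz fun x => c • f x := by
  obtain ⟨f, rfl⟩ := hf
  exact ⟨c • f, rfl⟩

theorem comp_neg (hf : IsSchwartz f) : IsSchwartz fun x => f (-x) := by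
  obtain ⟨f, rfl⟩ := hf
  exact ⟨SchwartzMap.compCLMOfContinuousLinearEquiv ℝ (ContinuousLinearEquiv.neg ℝ) f, rfl⟩

theorem pow_smul (hf : IsSchwartz f) (n : ℕ) : IsSchwartz fun x => x ^ n • f x := by
  obtain ⟨f, rfl⟩ := hf
  exact ⟨SchwartzMap.smulLeftCLM E (fun x : ℝ => x ^ n) f,
    funext fun x => SchwartzMap.smulLeftCLM_apply_apply (by fun_prop) f x⟩

theorem deriv (hf : IsSchwartz f) : IsSchwartz (deriv f) := by
  obtain ⟨f, rfl⟩ := hf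
  exact ⟨SchwartzMap.derivCLM ℝ E f, funext fun x => SchwartzMap.derivCLM_apply ℝ f x⟩

theorem smul_const {φ : ℝ → ℝ} (hφ : IsSchwartz φ) (y : E) : IsSchwartz fun x => φ x • y := by
  obtain ⟨φ, rfl⟩ := hφ
  exact ⟨SchwartzMap.postcompCLM ((ContinuousLinearMap.id ℝ ℝ).smulRight y) φ, rfl⟩

theorem evenPart (hf : IsSchwartz f) : IsSchwartz fun x => (2⁻¹ : ℝ) • (f x + f (-x)) :=
  (hf.add hf.comp_neg).const_smul _

end IsSchwartz

theorem iteratedDeriv_sub_smul {k : ℕ} (hf : ContDiff ℝ k f) (a : ℝ) :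
    iteratedDeriv k (fun x => (x - a) • f x) =
      fun x => (x - a) • iteratedDeriv k f x + (k : ℝ) • iteratedDeriv (k - 1) f x := by
  induction k with
  | zero => simp
  | succ k ih =>
    have hD (j : ℕ) (hj : j ≤ k) (x : ℝ) :
        HasDerivAt (iteratedDeriv j f) (iteratedDeriv (j + 1) f x) x := by
      rw [iteratedDeriv_succ]
      exact (hf.differentiable_iteratedDeriv j (by exact_mod_cast hj.trans_lt k.lt_succ_self) x
        ).hasDerivAt
    rw [iteratedDeriv_succ, ih (hf.of_le (by exact_mod_cast k.le_succ))]
    ext x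
    refine (((((hasDerivAt_id x).sub_const a).smul (hD k le_rfl x)).add
      ((hD (k - 1) (by lia) x).const_smul (k : ℝ))).congr_deriv ?_).deriv
    rcases k with _ | k
    · simp
    · simp only [id, Nat.add_sub_cancel]
      push_cast
      module

theorem IsSchwartz.of_sub_smul {a : ℝ} (hf : ContDiff ℝ ∞ f)
    (h : IsSchwartz fun x => (x - a) • f x) : IsSchwartz f := by
  have hd (k : ℕ) : RapidDecay fun x =>
      (x - a) • iteratedDeriv k f x + (k : ℝ) • iteratedDeriv (k - 1) f x := by
    rw [← iteratedDeriv_sub_smul (hf.of_le (by exact_mod_cast le_top))]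
    exact (isSchwartz_iff.1 h).2 k
  have hc (k : ℕ) : Continuous (iteratedDeriv k f) :=
    hf.continuous_iteratedDeriv k (by exact_mod_cast le_top)
  refine isSchwartz_iff.2 ⟨hf, fun k => ?_⟩
  induction k with
  | zero => exact RapidDecay.of_sub_smul (hc 0) (by simpa using hd 0)
  | succ k ih =>
    refine RapidDecay.of_sub_smul (a := a) (hc _) ?_
    simpa using (hd (k + 1)).sub (ih.const_smul ((k + 1 : ℕ) : ℝ))

theorem hasDerivAt_integral_pow_smul_comp (hf : ContDiff ℝ 1 f) (a : ℝ) (n : ℕ) (x : ℝ) :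
    HasDerivAt (fun x => ∫ t in (0 : ℝ)..1, t ^ n • f (a + t * (x - a)))
      (∫ t in (0 : ℝ)..1, t ^ (n + 1) • deriv f (a + t * (x - a))) x := by
  have hfc := hf.continuous
  have : Continuous (deriv f) := hf.continuous_deriv_one
  obtain ⟨B, hB⟩ := ((isCompact_Icc (a := (0 : ℝ)) (b := 1)).prod
    (isCompact_Icc (a := x - 1) (b := x + 1))).exists_bound_of_continuousOn
    (f := fun p : ℝ × ℝ => p.1 ^ (n + 1) • deriv f (a + p.1 * (p.2 - a))) (by fun_prop)
  refine (intervalIntegral.hasDerivAt_integral_of_dominated_loc_of_deriv_le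
    (F' := fun x t => t ^ (n + 1) • deriv f (a + t * (x - a))) (bound := fun _ => B)
    (Icc_mem_nhds (by linarith : x - 1 < x) (by linarith : x < x + 1))
    (Eventually.of_forall fun y => ?_) ?_ ?_ ?_ intervalIntegrable_const ?_).2
  · exact Continuous.aestronglyMeasurable (by fun_prop)
  · exact Continuous.intervalIntegrable (by fun_prop) _ _
  · exact Continuous.aestronglyMeasurable (by fun_prop)
  · refine Eventually.of_forall fun t ht y hy => hB (t, y) ⟨?_, hy⟩
    rw [Set.uIoc_of_le zero_le_one] at ht
    exact ⟨ht.1.le, ht.2⟩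
  · refine Eventually.of_forall fun t _ y _ => ?_
    have hlin : HasDerivAt (fun y : ℝ => a + t * (y - a)) t y := by
      simpa using (((hasDerivAt_id y).sub_const a).const_mul t).const_add a
    refine ((((hf.differentiable one_ne_zero) (a + t * (y - a))).hasDerivAt.scomp y
      hlin).const_smul (t ^ n)).congr_deriv ?_
    module

theorem contDiff_integral_comp (hf : ContDiff ℝ ∞ f) (a : ℝ) :
    ContDiff ℝ ∞ fun x => ∫ t in (0 : ℝ)..1, f (a + t * (x - a)) := by
  suffices h : ∀ N n : ℕ, ∀ f : ℝ → E, ContDiff ℝ ∞ f →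
      ContDiff ℝ N fun x => ∫ t in (0 : ℝ)..1, t ^ n • f (a + t * (x - a)) from
    contDiff_infty.2 fun N => by simpa using h N 0 f hf
  intro N
  induction N with
  | zero =>
    intro n f hf
    exact contDiff_zero.2 <| continuous_iff_continuousAt.2 fun x =>
      (hasDerivAt_integral_pow_smul_comp (hf.of_le (by simp)) a n x).continuousAt
  | succ N ih =>
    intro n f hf
    have hd := hasDerivAt_integral_pow_smul_comp (hf.of_le (by simp)) a n
    push_cast
    refine contDiff_succ_iff_deriv.2 ⟨fun x => (hd x).differentiableAt, by simp, ?_⟩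
    rw [funext fun x => (hd x).deriv]
    exact ih (n + 1) _ (contDiff_infty_iff_deriv.1 hf).2

section Division

variable [CompleteSpace E]

theorem integral_deriv_comp_smul (hf : ContDiff ℝ 1 f) (a x : ℝ) :
    (x - a) • ∫ t in (0 : ℝ)..1, deriv f (a + t * (x - a)) = f x - f a := by
  have : Continuous (deriv f) := hf.continuous_deriv_one
  have hd (t : ℝ) : HasDerivAt (fun t : ℝ => f (a + t * (x - a)))
      ((x - a) • deriv f (a + t * (x - a))) t := by
    have hlin : HasDerivAt (fun t : ℝ => a + t * (x - a)) (x - a) t := by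
      simpa using ((hasDerivAt_id t).mul_const (x - a)).const_add a
    exact ((hf.differentiable one_ne_zero) (a + t * (x - a))).hasDerivAt.scomp t hlin
  rw [← intervalIntegral.integral_smul, intervalIntegral.integral_eq_sub_of_hasDerivAt
    (fun t _ => hd t) (Continuous.intervalIntegrable (by fun_prop) _ _)]
  simp

namespace IsSchwartz

theorem exists_eq_sub_smul (hf : IsSchwartz f) {a : ℝ} (ha : f a = 0) :
    ∃ g : ℝ → E, IsSchwartz g ∧ ∀ x, f x = (x - a) • g x := by
  have hfg (x : ℝ) : f x = (x - a) • ∫ t in (0 : ℝ)..1, _root_.deriv f (a + t * (x - a)) := by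
    rw [integral_deriv_comp_smul (hf.contDiff.of_le (by simp)), ha, sub_zero]
  refine ⟨_, .of_sub_smul (a := a) (contDiff_integral_comp hf.deriv.contDiff a) ?_, hfg⟩
  rwa [← funext hfg]

theorem exists_deriv_eq_id_smul (hf : IsSchwartz f) (he : f.Even) :
    ∃ g : ℝ → E, IsSchwartz g ∧ g.Even ∧ ∀ x, _root_.deriv f x = x • g x := by
  have hodd : (_root_.deriv f).Odd := fun x => by
    conv_rhs => rw [← funext he, deriv_comp_neg, neg_neg]
  have : IsAddTorsionFree E := .of_isTorsionFree ℝ E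
  obtain ⟨g, hg, hfg⟩ := hf.deriv.exists_eq_sub_smul hodd.map_zero
  refine ⟨_, hg.evenPart, fun x => by simp [add_comm], fun x => ?_⟩
  have hneg := hodd x
  rw [hfg] at hneg
  rw [hfg] at hneg ⊢
  linear_combination (norm := module) (2⁻¹ : ℝ) • hneg

theorem exists_eq_sq_sub_sq_smul (hf : IsSchwartz f) (he : f.Even) {a : ℝ} (ha : f a = 0) :
    ∃ g : ℝ → E, IsSchwartz g ∧ g.Even ∧ ∀ x, f x = (x ^ 2 - a ^ 2) • g x := by
  obtain ⟨g, hg, hfg⟩ := hf.exists_eq_sub_smul ha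
  have hga : g (-a) = 0 := by
    rcases eq_or_ne a 0 with rfl | ha0
    · obtain ⟨k, -, -, hk⟩ := hf.exists_deriv_eq_id_smul he
      have hd : HasDerivAt f ((0 - 0 : ℝ) • _root_.deriv g 0 + (1 : ℝ) • g 0) 0 := by
        rw [funext hfg]
        exact ((hasDerivAt_id 0).sub_const 0).smul (hg.differentiable 0).hasDerivAt
      simpa [hk] using hd.deriv.symm
    · have hneg := hfg (-a)
      rw [he, ha, eq_comm, smul_eq_zero] at hneg
      exact hneg.resolve_left fun h => ha0 (by linarith)
  obtain ⟨k, hk, hgk⟩ := hg.exists_eq_sub_smul hga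
  refine ⟨_, hk.evenPart, fun x => by simp [add_comm], fun x => ?_⟩
  have hx := hfg x
  have hnx := hfg (-x)
  rw [hgk] at hx hnx
  rw [he] at hnx
  linear_combination (norm := module) (2⁻¹ : ℝ) • hx + (2⁻¹ : ℝ) • hnx

end IsSchwartz

end Division

theorem isSchwartz_of_hasDerivAt_neg_smul {G : ℕ → ℝ → E}
    (hG : ∀ n x, HasDerivAt (G n) (-(x • G (n + 1) x)) x) (hd : ∀ n, RapidDecay (G n)) (n : ℕ) :
    IsSchwartz (G n) := by
  have hderiv (n : ℕ) : deriv (G n) = fun x => -((x - 0) • G (n + 1) x) :=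
    funext fun x => by rw [(hG n x).deriv, sub_zero]
  have hsmooth (N : ℕ) : ∀ n, ContDiff ℝ N (G n) := by
    induction N with
    | zero =>
      intro n
      exact contDiff_zero.2 <| continuous_iff_continuousAt.2 fun x => (hG n x).continuousAt
    | succ N ih =>
      intro n
      push_cast
      refine contDiff_succ_iff_deriv.2 ⟨fun x => (hG n x).differentiableAt, by simp, ?_⟩
      rw [hderiv]
      exact ((contDiff_id.sub contDiff_const).smul (ih (n + 1))).neg
  refine isSchwartz_iff.2 ⟨contDiff_infty.2 fun N => hsmooth N n, fun k => ?_⟩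
  induction k using Nat.strong_induction_on generalizing n with
  | _ k ih =>
    rcases k with _ | k
    · exact hd n
    · rw [iteratedDeriv_succ', hderiv, funext (iteratedDeriv_fun_neg k _),
        iteratedDeriv_sub_smul (hsmooth k (n + 1))]
      refine (RapidDecay.add ?_ ((ih (k - 1) (by lia) (n + 1)).const_smul _)).neg
      simpa using (ih k k.lt_succ_self (n + 1)).id_smul

theorem iteratedDeriv_pow_smul_zero (hf : ContDiff ℝ ∞ f) {n k : ℕ} (hk : k < n) :
    iteratedDeriv k (fun x => x ^ n • f x) 0 = 0 := by
  induction n generalizing k with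
  | zero => lia
  | succ n ih =>
    have hfactor : (fun x => x ^ (n + 1) • f x) = fun x => (x - 0) • x ^ n • f x :=
      funext fun x => by module
    have hsmooth : ContDiff ℝ k fun x : ℝ => x ^ n • f x :=
      ((contDiff_id.pow n).smul hf).of_le (by exact_mod_cast le_top)
    rw [hfactor, iteratedDeriv_sub_smul hsmooth]
    rcases k with _ | k
    · simp
    · simp [ih (k := k) (by lia)]

theorem IsSchwartz.exists_eq_pow_smul [CompleteSpace E] (hf : IsSchwartz f) {n : ℕ}
    (h0 : ∀ k < n, iteratedDeriv k f 0 = 0) :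
    ∃ g : ℝ → E, IsSchwartz g ∧ ∀ x, f x = x ^ n • g x := by
  induction n generalizing f with
  | zero => exact ⟨f, hf, by simp⟩
  | succ n ih =>
    obtain ⟨g, hg, hfg⟩ := hf.exists_eq_sub_smul (a := 0) (by simpa using h0 0 n.succ_pos)
    obtain ⟨h, hh, hgh⟩ := ih hg fun k hk => by
      have hk0 := h0 (k + 1) (by lia)
      rw [funext hfg, iteratedDeriv_sub_smul (hg.contDiff.of_le (by exact_mod_cast le_top))] at hk0
      simpa [k.cast_add_one_ne_zero] using hk0
    exact ⟨h, hh, fun x => by rw [hfg, hgh]; module⟩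

end SchwartzFunctions

/-! ### The Bessel–Clifford function -/

section BesselClifford

theorem inv_Gamma_eq_mul_inv_Gamma_add_one (x : ℝ) : (Gamma x)⁻¹ = x * (Gamma (x + 1))⁻¹ := by
  rcases eq_or_ne x 0 with rfl | hx
  · simp [Gamma_zero]
  · rw [Gamma_add_one hx, mul_inv, mul_inv_cancel_left₀ hx]

/-- The `k`-th Taylor coefficient of `besselClifford m`. -/
noncomputable def besselCliffordCoeff (m : ℝ) (k : ℕ) : ℝ :=
  (k.factorial : ℝ)⁻¹ * (Gamma (k + m + 1))⁻¹

/-- The Bessel–Clifford function `w ↦ ∑ₖ wᵏ / (k! Γ(k + m + 1))`, an entire function for every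
order `m`: `Gamma` vanishes at its poles in Mathlib, so there `Γ⁻¹` has its true value `0`. The
normalized Bessel function is `Γ(m + 1) · besselClifford m (-(v / 2)²)`. -/
noncomputable def besselClifford (m w : ℝ) : ℝ :=
  ∑' k : ℕ, besselCliffordCoeff m k * w ^ k

theorem succ_mul_besselCliffordCoeff_succ (m : ℝ) (k : ℕ) :
    (k + 1) * besselCliffordCoeff m (k + 1) = besselCliffordCoeff (m + 1) k := by
  rw [besselCliffordCoeff, besselCliffordCoeff, Nat.factorial_succ]
  push_cast
  rw [show (k : ℝ) + 1 + m + 1 = k + (m + 1) + 1 by ring]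
  field_simp

theorem besselCliffordCoeff_eq_mul (m : ℝ) (k : ℕ) :
    besselCliffordCoeff m k = (k + m + 1) * besselCliffordCoeff (m + 1) k := by
  rw [besselCliffordCoeff, besselCliffordCoeff, inv_Gamma_eq_mul_inv_Gamma_add_one,
    show (k : ℝ) + m + 1 + 1 = k + (m + 1) + 1 by ring]
  ring

theorem summable_besselClifford (m w : ℝ) :
    Summable fun k : ℕ => besselCliffordCoeff m k * w ^ k := by
  refine summable_of_ratio_norm_eventually_le (r := 1 / 2) (by norm_num) ?_
  filter_upwards [eventually_ge_atTop (⌈2 * |w| + |m| + 1⌉₊)] with k hk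
  have hk : 2 * |w| + |m| + 1 ≤ k := Nat.ceil_le.1 hk
  have hm := neg_abs_le m
  have hw := abs_nonneg w
  have hsucc := succ_mul_besselCliffordCoeff_succ m k
  rw [besselCliffordCoeff_eq_mul m k, ← hsucc]
  calc ‖besselCliffordCoeff m (k + 1) * w ^ (k + 1)‖
      = |w| * |besselCliffordCoeff m (k + 1) * w ^ k| := by
        rw [norm_eq_abs, ← abs_mul]; ring_nf
    _ ≤ 1 / 2 * ((k + m + 1) * (k + 1)) * |besselCliffordCoeff m (k + 1) * w ^ k| := by
        gcongr
        nlinarith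
    _ = 1 / 2 * ‖(k + m + 1) * ((k + 1) * besselCliffordCoeff m (k + 1)) * w ^ k‖ := by
        simp only [norm_mul, norm_eq_abs, abs_mul]
        rw [abs_of_nonneg (by linarith : 0 ≤ (k : ℝ) + m + 1),
          abs_of_nonneg (by positivity : 0 ≤ (k : ℝ) + 1)]
        ring

theorem hasDerivAt_besselClifford (m w : ℝ) :
    HasDerivAt (besselClifford m) (besselClifford (m + 1) w) w := by
  have hshift (y : ℝ) (k : ℕ) : besselCliffordCoeff m (k + 1) * (((k + 1 : ℕ) : ℝ) * y ^ k) =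
      besselCliffordCoeff (m + 1) k * y ^ k := by
    rw [← succ_mul_besselCliffordCoeff_succ]
    push_cast
    ring
  have hsum (y : ℝ) : Summable fun k : ℕ => besselCliffordCoeff m k * (k * y ^ (k - 1)) := by
    rw [← summable_nat_add_iff 1]
    simpa only [Nat.add_sub_cancel, hshift] using summable_besselClifford (m + 1) y
  have key := hasDerivAt_tsum_of_isPreconnected (g := fun k y => besselCliffordCoeff m k * y ^ k)
    (g' := fun k y => besselCliffordCoeff m k * (k * y ^ (k - 1))) (t := Metric.ball 0 (|w| + 1))
    (y₀ := w) (y := w) (hsum (|w| + 1)).norm Metric.isOpen_ball (convex_ball _ _).isPreconnected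
    (fun k y _ => (hasDerivAt_pow k y).const_mul _) (fun k y hy => ?_) (by simp)
    (summable_besselClifford m w) (by simp)
  · refine key.congr_deriv ?_
    rw [(hsum w).tsum_eq_zero_add]
    simp only [Nat.add_sub_cancel, hshift, Nat.cast_zero, zero_mul, mul_zero, zero_add,
      besselClifford]
  · have hy : |y| ≤ |w| + 1 := by simpa using (Metric.mem_ball.1 hy).le
    simp only [norm_mul, norm_pow, norm_eq_abs, abs_of_nonneg (by positivity : 0 ≤ |w| + 1)]
    gcongr

theorem continuous_besselClifford (m : ℝ) : Continuous (besselClifford m) :=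
  continuous_iff_continuousAt.2 fun w => (hasDerivAt_besselClifford m w).continuousAt

theorem besselClifford_zero (m : ℝ) : besselClifford m 0 = (Gamma (m + 1))⁻¹ := by
  rw [besselClifford, tsum_eq_single 0 fun k hk => by simp [hk]]
  simp [besselCliffordCoeff]

theorem besselClifford_contiguous (m w : ℝ) :
    (m + 1) * besselClifford (m + 1) w + w * besselClifford (m + 2) w = besselClifford m w := by
  have hsum := summable_besselClifford
  simp only [besselClifford]
  rw [(hsum (m + 1) w).tsum_eq_zero_add, (hsum m w).tsum_eq_zero_add, mul_add, add_assoc,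
    ← tsum_mul_left, ← tsum_mul_left,
    ← (((summable_nat_add_iff 1).2 (hsum (m + 1) w)).mul_left (m + 1)).tsum_add
      ((hsum (m + 2) w).mul_left w)]
  congr 1
  · rw [besselCliffordCoeff_eq_mul m]
    push_cast
    ring
  · refine tsum_congr fun k => ?_
    have h1 := besselCliffordCoeff_eq_mul m (k + 1)
    have h2 := succ_mul_besselCliffordCoeff_succ (m + 1) k
    rw [show m + 1 + 1 = m + 2 by ring] at h2
    push_cast at h1
    linear_combination -(w ^ (k + 1)) * h1 - w ^ (k + 1) * h2

theorem abs_besselClifford_neg_le {m w : ℝ} (hm : -(1 / 2) ≤ m) (hw : 0 ≤ w) :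
    |besselClifford m (-w)| ≤ (Gamma (m + 1))⁻¹ := by
  set energy : ℝ → ℝ := fun w =>
    besselClifford m (-w) ^ 2 + w * besselClifford (m + 1) (-w) ^ 2 with henergy
  have hC (m w : ℝ) :
      HasDerivAt (fun w => besselClifford m (-w)) (-besselClifford (m + 1) (-w)) w := by
    simpa [Function.comp_def] using
      (hasDerivAt_besselClifford m (-w)).scomp w (hasDerivAt_neg w)
  have hE (w : ℝ) : HasDerivAt energy (-((2 * m + 1) * besselClifford (m + 1) (-w) ^ 2)) w := by
    refine (((hC m w).pow 2).add ((hasDerivAt_id w).mul ((hC (m + 1) w).pow 2))).congr_deriv ?_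
    have hrel := besselClifford_contiguous m (-w)
    rw [show m + 1 + 1 = m + 2 by ring, ← hrel]
    simp only [Nat.cast_ofNat, Nat.add_one_sub_one, pow_one, Pi.pow_apply, one_mul, id]
    ring
  have hanti : AntitoneOn energy (Set.Ici 0) := antitoneOn_of_deriv_nonpos (convex_Ici 0)
    (fun w _ => (hE w).continuousAt.continuousWithinAt)
    (fun w _ => (hE w).differentiableAt.differentiableWithinAt)
    fun w _ => by
      rw [(hE w).deriv]
      have : 0 ≤ 2 * m + 1 := by linarith
      exact neg_nonpos.2 (by positivity)
  have hle := hanti Set.self_mem_Ici hw hw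
  simp only [henergy, neg_zero, besselClifford_zero, zero_mul, add_zero] at hle
  have hG : 0 ≤ (Gamma (m + 1))⁻¹ := inv_nonneg.2 (Gamma_nonneg_of_nonneg (by linarith))
  refine abs_le_of_sq_le_sq (le_trans ?_ hle) hG
  exact le_add_of_nonneg_right (by positivity)

theorem exists_abs_besselClifford_neg_le {m : ℝ} (hm : -(3 / 2) ≤ m) :
    ∃ A, ∀ w, 0 ≤ w → |besselClifford m (-w)| ≤ A * (1 + w) := by
  have hnn (x : ℝ) (hx : 0 ≤ x) : 0 ≤ (Gamma x)⁻¹ := inv_nonneg.2 (Gamma_nonneg_of_nonneg hx)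
  have h1 := hnn (m + 1 + 1) (by linarith)
  have h2 := hnn (m + 2 + 1) (by linarith)
  refine ⟨|m + 1| * (Gamma (m + 1 + 1))⁻¹ + (Gamma (m + 2 + 1))⁻¹, fun w hw => ?_⟩
  have hb1 := abs_besselClifford_neg_le (m := m + 1) (by linarith) hw
  have hb2 := abs_besselClifford_neg_le (m := m + 2) (by linarith) hw
  calc |besselClifford m (-w)|
      ≤ |m + 1| * |besselClifford (m + 1) (-w)| + w * |besselClifford (m + 2) (-w)| := by
        rw [← besselClifford_contiguous]
        refine (abs_add_le _ _).trans_eq ?_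
        rw [abs_mul, abs_mul, abs_neg, abs_of_nonneg hw]
    _ ≤ |m + 1| * (Gamma (m + 1 + 1))⁻¹ + w * (Gamma (m + 2 + 1))⁻¹ := by gcongr
    _ ≤ _ := by
        nlinarith [mul_nonneg (mul_nonneg (abs_nonneg (m + 1)) h1) hw]

end BesselClifford

/-! ### Weighted integrals -/

section WeightedIntegrals

variable {E : Type*} [NormedAddCommGroup E] [NormedSpace ℝ E] {f : ℝ → E} {p : ℝ}

theorem continuous_abs_rpow_mul_self (hp : -1 < p) : Continuous fun u : ℝ => |u| ^ p * u := by
  refine continuous_iff_continuousAt.2 fun x => ?_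
  rcases eq_or_ne x 0 with rfl | hx
  · have hlim : Tendsto (fun u : ℝ => |u| ^ (p + 1)) (nhds 0) (nhds 0) := by
      simpa [zero_rpow (by linarith : p + 1 ≠ 0)] using
        (continuous_abs.rpow_const (fun _ => Or.inr (by linarith : 0 ≤ p + 1))).tendsto (0 : ℝ)
    simp only [ContinuousAt, mul_zero]
    refine squeeze_zero_norm (fun u => ?_) hlim
    rcases eq_or_ne u 0 with rfl | hu
    · simp [rpow_nonneg]
    · simp [rpow_add_one (abs_ne_zero.2 hu), abs_rpow_of_nonneg]
  · exact (continuous_abs.continuousAt.rpow_const (Or.inl (abs_ne_zero.2 hx))).mul continuousAt_id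

theorem hasDerivAt_abs_rpow_mul_self {u : ℝ} (hu : u ≠ 0) (p : ℝ) :
    HasDerivAt (fun u : ℝ => |u| ^ p * u) ((p + 1) * |u| ^ p) u := by
  refine (((hasDerivAt_abs hu).rpow_const (Or.inl (abs_ne_zero.2 hu))).mul
    (hasDerivAt_id u)).congr_deriv ?_
  have hsign : (SignType.sign u : ℝ) * u = |u| := sign_mul_self u
  have hpow : |u| ^ (p - 1) * |u| = |u| ^ p := by
    rw [← rpow_add_one (abs_ne_zero.2 hu), sub_add_cancel]
  simp only [id]
  linear_combination p * |u| ^ (p - 1) * hsign + p * hpow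

theorem integrable_abs_rpow_mul_exp_neg_sq (hp : -1 < p) :
    Integrable fun u : ℝ => |u| ^ p * exp (-u ^ 2) := by
  have h := (integrable_fun_norm_addHaar volume (E := ℝ)
    (f := fun y : ℝ => y ^ p * exp (-1 * y ^ 2))).2
    (by simpa using integrableOn_rpow_mul_exp_neg_mul_sq one_pos hp)
  simpa using h

theorem IsSchwartz.integrable_abs_rpow_smul (hf : IsSchwartz f) (hp : -1 < p) :
    Integrable fun u => |u| ^ p • f u := by
  obtain ⟨C, hC⟩ := rapidDecay_iff.1 hf.rapidDecay 0
  have hC0 : 0 ≤ C := by simpa using (mul_nonneg (by simp) (norm_nonneg _)).trans (hC 0)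
  obtain ⟨φ, rfl⟩ := hf
  refine (((integrable_abs_rpow_mul_exp_neg_sq hp).const_mul (C * exp 1)).add
    (φ.integrable_pow_mul volume ⌈p⌉₊)).mono' ?_ (Eventually.of_forall fun u => ?_)
  · exact ((measurable_norm.pow_const p).aestronglyMeasurable).smul
      φ.continuous.aestronglyMeasurable
  · have hCu : ‖φ u‖ ≤ C := by simpa using hC u
    simp only [Pi.add_apply, norm_smul, norm_eq_abs, abs_rpow_of_nonneg (abs_nonneg u), abs_abs]
    rcases le_total |u| 1 with hu | hu
    · have hexp : 1 ≤ exp 1 * exp (-u ^ 2) := by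
        rw [← exp_add]
        exact one_le_exp (by linarith [(sq_le_one_iff_abs_le_one u).2 hu])
      calc |u| ^ p * ‖φ u‖ ≤ |u| ^ p * (C * (exp 1 * exp (-u ^ 2))) := by
            gcongr; exact hCu.trans (le_mul_of_one_le_right hC0 hexp)
        _ = C * exp 1 * (|u| ^ p * exp (-u ^ 2)) := by ring
        _ ≤ _ := le_add_of_nonneg_right (by positivity)
    · calc |u| ^ p * ‖φ u‖ ≤ |u| ^ ⌈p⌉₊ * ‖φ u‖ := by
            gcongr
            rw [← rpow_natCast]
            exact rpow_le_rpow_of_exponent_le hu (Nat.le_ceil p)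
        _ ≤ _ := le_add_of_nonneg_left (by positivity)

theorem IsSchwartz.integrable_abs_rpow_mul_smul (hf : IsSchwartz f) (hp : -1 < p) {φ : ℝ → ℝ}
    (hφ : Continuous φ) {A : ℝ} (hA : ∀ u, |φ u| ≤ A * (1 + u ^ 2)) :
    Integrable fun u => (|u| ^ p * φ u) • f u := by
  refine ((hf.add (hf.pow_smul 2)).integrable_abs_rpow_smul hp |>.norm.const_mul A).mono' ?_
    (Eventually.of_forall fun u => ?_)
  · exact ((measurable_norm.pow_const p).mul hφ.measurable).aestronglyMeasurable.smul
      hf.continuous.aestronglyMeasurable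
  · have hsum : f u + u ^ 2 • f u = (1 + u ^ 2) • f u := by module
    rw [hsum]
    simp only [norm_smul, norm_mul, norm_eq_abs, abs_of_pos (by positivity : 0 < 1 + u ^ 2)]
    calc |(|u| ^ p)| * |φ u| * ‖f u‖ ≤ |(|u| ^ p)| * (A * (1 + u ^ 2)) * ‖f u‖ := by
          gcongr; exact hA u
      _ = _ := by ring

theorem integral_eq_zero_of_odd (hf : f.Odd) : ∫ x, f x = 0 := by
  have : IsAddTorsionFree E := .of_isTorsionFree ℝ E
  rw [← self_eq_neg, ← integral_neg, ← integral_neg_eq_self f]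
  simp only [hf _]

theorem integral_eq_zero_of_hasDerivAt_off [CompleteSpace E] {F F' : ℝ → E} {a : ℝ}
    (hF : Continuous F) (hd : ∀ x ≠ a, HasDerivAt F (F' x) x) (hi : Integrable F)
    (hi' : Integrable F') :
    ∫ x, F' x = 0 := by
  have htop : Tendsto F atTop (nhds 0) :=
    tendsto_zero_of_hasDerivAt_of_integrableOn_Ioi (a := a) (fun x hx => hd x (ne_of_gt hx))
      hi'.integrableOn hi.integrableOn
  have hbot : Tendsto F atBot (nhds 0) :=
    tendsto_zero_of_hasDerivAt_of_integrableOn_Iic (a := a - 1)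
      (fun x hx => hd x (ne_of_lt (lt_of_le_of_lt hx (sub_one_lt a))))
      hi'.integrableOn hi.integrableOn
  rw [← intervalIntegral.integral_Iic_add_Ioi (b := a) hi'.integrableOn hi'.integrableOn,
    integral_Ioi_of_hasDerivAt_of_tendsto hF.continuousWithinAt
      (fun x hx => hd x (ne_of_gt hx)) hi'.integrableOn htop,
    integral_Iic_of_hasDerivAt_of_tendsto hF.continuousWithinAt
      (fun x hx => hd x (ne_of_lt hx)) hi'.integrableOn hbot]
  abel

end WeightedIntegrals

/-! ### The Hankel kernel -/

section HankelKernel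

variable {m : ℝ}

/-- The kernel `j_m(u v) |u| ^ (2m + 1) / (2 ^ (m + 1) Γ(m + 1))` of the Hankel transform over the
whole line, with the constant that makes the transform an involution on even functions. -/
noncomputable def hankelKernel (m u v : ℝ) : ℝ :=
  |u| ^ (2 * m + 1) / 2 ^ (m + 1) * besselClifford m (-(u * v / 2) ^ 2)

theorem hankelKernel_neg_left (m u v : ℝ) : hankelKernel m (-u) v = hankelKernel m u v := by
  simp only [hankelKernel, abs_neg, neg_mul, neg_div, neg_sq]

theorem hankelKernel_neg_right (m u v : ℝ) : hankelKernel m u (-v) = hankelKernel m u v := by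
  simp only [hankelKernel, mul_neg, neg_div, neg_sq]

theorem hankelKernel_add_natCast (hm : -1 < m) (n : ℕ) (u v : ℝ) :
    hankelKernel (m + n) u v = |u| ^ (2 * m + 1) / 2 ^ (m + 1) * (u ^ 2 / 2) ^ n *
      besselClifford (m + n) (-(u * v / 2) ^ 2) := by
  have habs : |u| ^ (2 * (m + n) + 1) = |u| ^ (2 * m + 1) * (u ^ 2) ^ n := by
    rcases eq_or_ne u 0 with rfl | hu
    · rcases n with _ | n
      · simp
      · rw [abs_zero, zero_rpow (by push_cast; linarith [n.cast_nonneg (α := ℝ)])]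
        simp
    · rw [show 2 * (m + n) + 1 = 2 * m + 1 + (2 * n : ℕ) by push_cast; ring,
        rpow_add_natCast (abs_ne_zero.2 hu), pow_mul, sq_abs]
  rw [hankelKernel, habs, show m + n + 1 = m + 1 + n by ring, rpow_add_natCast two_ne_zero,
    div_pow (u ^ 2)]
  field_simp

theorem hankelKernel_add_one (hm : -1 < m) (u v : ℝ) :
    hankelKernel (m + 1) u v = |u| ^ (2 * m + 1) / 2 ^ (m + 1) * (u ^ 2 / 2) *
      besselClifford (m + 1) (-(u * v / 2) ^ 2) := by
  simpa using hankelKernel_add_natCast hm 1 u v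

theorem hasDerivAt_hankelKernel_right (hm : -1 < m) (u v : ℝ) :
    HasDerivAt (hankelKernel m u) (-(v * hankelKernel (m + 1) u v)) v := by
  have harg : HasDerivAt (fun v : ℝ => -(u * v / 2) ^ 2) (-(u ^ 2 * v / 2)) v := by
    refine ((((hasDerivAt_id v).const_mul u).div_const 2).pow 2).neg.congr_deriv ?_
    simp only [id]
    ring
  refine (((hasDerivAt_besselClifford m _).comp v harg).const_mul _).congr_deriv ?_
  rw [hankelKernel_add_one hm]
  ring

theorem sq_mul_hankelKernel (hm : -1 < m) (u v : ℝ) :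
    u ^ 2 * hankelKernel m u v =
      (2 * m + 2) * hankelKernel (m + 1) u v - v ^ 2 * hankelKernel (m + 2) u v := by
  have hrel := besselClifford_contiguous m (-(u * v / 2) ^ 2)
  have h2 := hankelKernel_add_natCast hm 2 u v
  rw [Nat.cast_two] at h2
  rw [hankelKernel_add_one hm, h2, hankelKernel, ← hrel]
  ring

theorem inv_mul_hankelKernel_add_one (hm : -1 < m) (u v : ℝ) :
    u⁻¹ * hankelKernel (m + 1) u v = |u| ^ (2 * m + 1) * u *
      (besselClifford (m + 1) (-(u * v / 2) ^ 2) / (2 ^ (m + 1) * 2)) := by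
  rw [hankelKernel_add_one hm]
  rcases eq_or_ne u 0 with rfl | hu
  · simp
  · field_simp

theorem hasDerivAt_inv_mul_hankelKernel_add_one (hm : -1 < m) {u : ℝ} (hu : u ≠ 0) (v : ℝ) :
    HasDerivAt (fun u => u⁻¹ * hankelKernel (m + 1) u v) (hankelKernel m u v) u := by
  have harg : HasDerivAt (fun u : ℝ => -(u * v / 2) ^ 2) (-(u * v ^ 2 / 2)) u := by
    refine ((((hasDerivAt_id u).mul_const v).div_const 2).pow 2).neg.congr_deriv ?_
    simp only [id]
    ring
  simp only [inv_mul_hankelKernel_add_one hm]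
  refine ((hasDerivAt_abs_rpow_mul_self hu _).mul
    (((hasDerivAt_besselClifford (m + 1) _).comp u harg).div_const _)).congr_deriv ?_
  rw [hankelKernel, ← besselClifford_contiguous m, show m + 1 + 1 = m + 2 by ring]
  simp only [Function.comp_apply]
  field_simp
  ring

end HankelKernel

/-! ### The Hankel transform -/

section KernelBounds

variable {E : Type*} [NormedAddCommGroup E] [NormedSpace ℝ E] {f : ℝ → E} {m : ℝ}

theorem abs_hankelKernel_le (hm : -(1 / 2) ≤ m) (u v : ℝ) :
    |hankelKernel m u v| ≤ hankelKernel m u 0 := by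
  have hbound := abs_besselClifford_neg_le hm (sq_nonneg (u * v / 2))
  have hweight : 0 ≤ |u| ^ (2 * m + 1) / 2 ^ (m + 1) := by positivity
  simp only [hankelKernel, abs_mul, abs_of_nonneg hweight, mul_zero, zero_div, ne_eq,
    OfNat.ofNat_ne_zero, not_false_eq_true, zero_pow, neg_zero, besselClifford_zero]
  gcongr

theorem exists_abs_besselClifford_neg_sq_le (hm : -(3 / 2) ≤ m) (v : ℝ) :
    ∃ A, ∀ u, |besselClifford m (-(u * v / 2) ^ 2)| ≤ A * (1 + u ^ 2) := by
  obtain ⟨A, hA⟩ := exists_abs_besselClifford_neg_le hm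
  have hA0 : 0 ≤ A := by simpa using (abs_nonneg _).trans (hA 0 le_rfl)
  refine ⟨A * (1 + v ^ 2), fun u => (hA _ (sq_nonneg _)).trans ?_⟩
  rw [mul_assoc]
  gcongr
  nlinarith [sq_nonneg u, sq_nonneg v, sq_nonneg (u * v)]

theorem IsSchwartz.integrable_hankelKernel_smul (hf : IsSchwartz f) (hm : -1 < m) (v : ℝ) :
    Integrable fun u => hankelKernel m u v • f u := by
  obtain ⟨A, hA⟩ := exists_abs_besselClifford_neg_sq_le (by linarith : -(3 / 2) ≤ m) v
  have hc : Continuous fun u => besselClifford m (-(u * v / 2) ^ 2) :=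
    (continuous_besselClifford m).comp (by fun_prop)
  refine ((hf.integrable_abs_rpow_mul_smul (by linarith : -1 < 2 * m + 1) hc hA).smul
    ((2 : ℝ) ^ (m + 1))⁻¹).congr (Eventually.of_forall fun u => ?_)
  simp only [Pi.smul_apply, hankelKernel]
  module

theorem IsSchwartz.integrable_inv_mul_hankelKernel_smul (hf : IsSchwartz f) (hm : -1 < m) (v : ℝ) :
    Integrable fun u => (u⁻¹ * hankelKernel (m + 1) u v) • f u := by
  obtain ⟨A, hA⟩ := exists_abs_besselClifford_neg_sq_le (by linarith : -(3 / 2) ≤ m + 1) v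
  have hc : Continuous fun u => besselClifford (m + 1) (-(u * v / 2) ^ 2) :=
    (continuous_besselClifford _).comp (by fun_prop)
  refine (((hf.pow_smul 1).integrable_abs_rpow_mul_smul (by linarith : -1 < 2 * m + 1) hc hA).smul
    ((2 : ℝ) ^ (m + 1) * 2)⁻¹).congr (Eventually.of_forall fun u => ?_)
  simp only [Pi.smul_apply, inv_mul_hankelKernel_add_one hm]
  module

end KernelBounds

section Hankel

variable {E : Type*} [NormedAddCommGroup E] [NormedSpace ℝ E] {f g h : ℝ → E} {m : ℝ}

/-- The Hankel transform of order `m`, extended to functions on the whole line: it sees only the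
even part of `f`. -/
noncomputable def hankel (m : ℝ) (f : ℝ → E) (v : ℝ) : E := ∫ u, hankelKernel m u v • f u

theorem even_hankel (m : ℝ) (f : ℝ → E) : (hankel m f).Even := fun v => by
  simp only [hankel, hankelKernel_neg_right]

theorem hankel_const_smul {𝕜 : Type*} [NormedDivisionRing 𝕜] [Module 𝕜 E] [NormSMulClass 𝕜 E]
    [SMulCommClass ℝ 𝕜 E] (m : ℝ) (c : 𝕜) (f : ℝ → E) (v : ℝ) :
    hankel m (fun u => c • f u) v = c • hankel m f v := by
  rw [hankel, hankel, ← integral_smul]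
  exact integral_congr_ae (Eventually.of_forall fun u => smul_comm _ _ _)

theorem hankel_neg (m : ℝ) (f : ℝ → E) (v : ℝ) : hankel m (fun u => -f u) v = -hankel m f v := by
  simp only [hankel, smul_neg, integral_neg]

theorem hankel_add (hm : -1 < m) (hf : IsSchwartz f) (hg : IsSchwartz g) (v : ℝ) :
    hankel m (fun u => f u + g u) v = hankel m f v + hankel m g v := by
  simp only [hankel, smul_add]
  exact integral_add (hf.integrable_hankelKernel_smul hm v) (hg.integrable_hankelKernel_smul hm v)

theorem hankel_sub (hm : -1 < m) (hf : IsSchwartz f) (hg : IsSchwartz g) (v : ℝ) :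
    hankel m (fun u => f u - g u) v = hankel m f v - hankel m g v := by
  simp only [hankel, smul_sub]
  exact integral_sub (hf.integrable_hankelKernel_smul hm v) (hg.integrable_hankelKernel_smul hm v)

theorem hankel_sq_smul (hm : -1 < m) (hf : IsSchwartz f) (v : ℝ) :
    hankel m (fun u => u ^ 2 • f u) v =
      (2 * m + 2) • hankel (m + 1) f v - v ^ 2 • hankel (m + 2) f v := by
  have hint₁ := hf.integrable_hankelKernel_smul (by linarith : -1 < m + 1) v
  have hint₂ := hf.integrable_hankelKernel_smul (by linarith : -1 < m + 2) v
  rw [hankel, hankel, hankel, ← integral_smul, ← integral_smul,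
    ← integral_sub (hint₁.fun_smul _) (hint₂.fun_smul _)]
  refine integral_congr_ae (Eventually.of_forall fun u => ?_)
  simp only [smul_smul, mul_comm _ (u ^ 2), sq_mul_hankelKernel hm, sub_smul]

theorem norm_hankel_le (hm : -(1 / 2) ≤ m) (hf : IsSchwartz f) (v : ℝ) :
    ‖hankel m f v‖ ≤ ∫ u, hankelKernel m u 0 * ‖f u‖ := by
  have hint := (hf.integrable_hankelKernel_smul (by linarith : -1 < m) 0).norm
  have hpos (u : ℝ) : 0 ≤ hankelKernel m u 0 := (abs_nonneg _).trans (abs_hankelKernel_le hm u 0)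
  simp only [norm_smul, norm_eq_abs, abs_of_nonneg (hpos _)] at hint
  refine norm_integral_le_of_norm_le hint (Eventually.of_forall fun u => ?_)
  rw [norm_smul]
  gcongr
  exact abs_hankelKernel_le hm u v

theorem hasDerivAt_hankel (hm : -1 < m) (hf : IsSchwartz f) (v : ℝ) :
    HasDerivAt (hankel m f) (-(v • hankel (m + 1) f v)) v := by
  have hint' := hf.integrable_hankelKernel_smul (by linarith : -1 < m + 1)
  have hm' : -(1 / 2) ≤ m + 1 := by linarith
  refine (hasDerivAt_integral_of_dominated_loc_of_deriv_le (Metric.ball_mem_nhds v one_pos)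
    (F' := fun w u => -(w * hankelKernel (m + 1) u w) • f u)
    (bound := fun u => (|v| + 1) * ‖hankelKernel (m + 1) u 0 • f u‖)
    (Eventually.of_forall fun w => (hf.integrable_hankelKernel_smul hm w).aestronglyMeasurable)
    (hf.integrable_hankelKernel_smul hm v) ?_ ?_ ((hint' 0).norm.const_mul _) ?_).2.congr_deriv ?_
  · simpa only [mul_smul, neg_smul] using ((hint' v).fun_smul v).fun_neg.aestronglyMeasurable
  · refine Eventually.of_forall fun u w hw => ?_
    have hw : |w| ≤ |v| + 1 := by
      have := abs_sub_abs_le_abs_sub w v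
      rw [Metric.mem_ball, dist_eq] at hw
      linarith
    have hK := (abs_hankelKernel_le hm' u w).trans (le_abs_self _)
    rw [norm_smul, norm_smul, norm_neg, norm_mul, mul_assoc]
    simp only [norm_eq_abs]
    gcongr
  · exact Eventually.of_forall fun u w _ => (hasDerivAt_hankelKernel_right hm u w).smul_const _
  · simp only [neg_smul, mul_smul, integral_neg, integral_smul, hankel]

section InverseDerivative

variable [CompleteSpace E]

theorem hankel_add_one_of_hasDerivAt (hm : -1 < m) (hf : IsSchwartz f) (hg : IsSchwartz g)
    (hfg : ∀ x, HasDerivAt f (x • g x) x) (v : ℝ) : hankel (m + 1) g v = -hankel m f v := by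
  have hint := hf.integrable_hankelKernel_smul hm v
  have hint' := hg.integrable_hankelKernel_smul (by linarith : -1 < m + 1) v
  rw [eq_neg_iff_add_eq_zero, hankel, hankel, ← integral_add hint' hint]
  refine integral_eq_zero_of_hasDerivAt_off (a := 0)
    (F := fun u => (u⁻¹ * hankelKernel (m + 1) u v) • f u) ?_ (fun u hu => ?_)
    (hf.integrable_inv_mul_hankelKernel_smul hm v) (hint'.add hint)
  · simp only [inv_mul_hankelKernel_add_one hm]
    have := (continuous_besselClifford (m + 1)).comp (by fun_prop : Continuous fun u : ℝ =>
      -(u * v / 2) ^ 2)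
    exact ((continuous_abs_rpow_mul_self (by linarith)).mul (this.div_const _)).smul hf.continuous
  · refine ((hasDerivAt_inv_mul_hankelKernel_add_one hm hu v).smul (hfg u)).congr_deriv ?_
    rw [smul_smul, mul_right_comm, inv_mul_cancel₀ hu, one_mul]

theorem sq_smul_hankel (hm : -1 < m) (hf : IsSchwartz f) (hg : IsSchwartz g) (hh : IsSchwartz h)
    (hfg : ∀ x, HasDerivAt f (x • g x) x) (hgh : ∀ x, HasDerivAt g (x • h x) x) (v : ℝ) :
    v ^ 2 • hankel m f v = -hankel m (fun u => (2 * m + 2) • g u + u ^ 2 • h u) v := by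
  have hfg' := hankel_add_one_of_hasDerivAt hm hf hg hfg v
  have hgh' := hankel_add_one_of_hasDerivAt hm hg hh hgh v
  have hgh'' := hankel_add_one_of_hasDerivAt (by linarith : -1 < m + 1) hg hh hgh v
  rw [show m + 1 + 1 = m + 2 by ring] at hgh''
  rw [hankel_add hm (hg.const_smul _) (hh.pow_smul 2), hankel_const_smul, hankel_sq_smul hm hh,
    hgh'', hgh', hfg']
  module

theorem IsSchwartz.exists_hasDerivAt_id_smul (hf : IsSchwartz f) (he : f.Even) :
    ∃ g : ℝ → E, IsSchwartz g ∧ g.Even ∧ ∀ x, HasDerivAt f (x • g x) x := by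
  obtain ⟨g, hg, hge, hfg⟩ := hf.exists_deriv_eq_id_smul he
  exact ⟨g, hg, hge, fun x => hfg x ▸ (hf.differentiable x).hasDerivAt⟩

theorem exists_norm_hankel_le (hm : -1 < m) (hf : IsSchwartz f) (he : f.Even) :
    ∃ C, ∀ v, ‖hankel m f v‖ ≤ C := by
  obtain ⟨g, hg, -, hfg⟩ := hf.exists_hasDerivAt_id_smul he
  refine ⟨∫ u, hankelKernel (m + 1) u 0 * ‖g u‖, fun v => ?_⟩
  rw [← norm_neg, ← hankel_add_one_of_hasDerivAt hm hf hg hfg]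
  exact norm_hankel_le (by linarith) hg v

theorem exists_one_add_sq_smul_hankel (hm : -1 < m) (hf : IsSchwartz f) (he : f.Even) :
    ∃ g : ℝ → E, IsSchwartz g ∧ g.Even ∧
      ∀ v, (1 + v ^ 2) • hankel m f v = hankel m g v := by
  obtain ⟨g, hg, hge, hfg⟩ := hf.exists_hasDerivAt_id_smul he
  obtain ⟨h, hh, hhe, hgh⟩ := hg.exists_hasDerivAt_id_smul hge
  have hL := (hg.const_smul (2 * m + 2)).add (hh.pow_smul 2)
  refine ⟨_, hf.sub hL, fun x => ?_, fun v => ?_⟩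
  · simp only [he x, hge x, hhe x, neg_sq]
  · rw [hankel_sub hm hf hL, add_smul, sq_smul_hankel hm hf hg hh hfg hgh, one_smul, sub_eq_add_neg]

theorem rapidDecay_hankel (hm : -1 < m) (hf : IsSchwartz f) (he : f.Even) :
    RapidDecay (hankel m f) := by
  have hbound (k : ℕ) : ∀ f : ℝ → E, IsSchwartz f → f.Even →
      ∃ C, ∀ v, (1 + v ^ 2) ^ k * ‖hankel m f v‖ ≤ C := by
    induction k with
    | zero => simpa using fun f hf he => exists_norm_hankel_le hm hf he
    | succ k ih =>
      intro f hf he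
      obtain ⟨g, hg, hge, hfg⟩ := exists_one_add_sq_smul_hankel hm hf he
      obtain ⟨C, hC⟩ := ih g hg hge
      refine ⟨C, fun v => ?_⟩
      have hpos : 0 < 1 + v ^ 2 := by positivity
      have hCv := hC v
      rwa [← hfg, norm_smul, norm_eq_abs, abs_of_pos hpos, ← mul_assoc, ← pow_succ] at hCv
  refine rapidDecay_iff.2 fun k => ?_
  obtain ⟨C, hC⟩ := hbound k f hf he
  refine ⟨C, fun v => le_trans ?_ (hC v)⟩
  gcongr
  nlinarith [sq_abs v, abs_nonneg v, sq_nonneg (|v| - 1)]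

theorem isSchwartz_hankel (hm : -1 < m) (hf : IsSchwartz f) (he : f.Even) :
    IsSchwartz (hankel m f) := by
  have hmn (n : ℕ) : -1 < m + n := by linarith [n.cast_nonneg (α := ℝ)]
  simpa using isSchwartz_of_hasDerivAt_neg_smul (G := fun n : ℕ => hankel (m + n) f)
    (fun n v => by simpa [add_assoc] using hasDerivAt_hankel (hmn n) hf v)
    (fun n => rapidDecay_hankel (hmn n) hf he) 0

theorem hankel_hankel_sq_smul (hm : -1 < m) (hf : IsSchwartz f) (he : f.Even) (v : ℝ) :
    hankel m (hankel m fun u => u ^ 2 • f u) v = v ^ 2 • hankel m (hankel m f) v := by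
  have hm1 : -1 < m + 1 := by linarith
  have hg : IsSchwartz fun x => -hankel (m + 1) f x := by
    simpa using (isSchwartz_hankel hm1 hf he).const_smul (-1 : ℝ)
  have hderiv (x : ℝ) : HasDerivAt (hankel m f) (x • -hankel (m + 1) f x) x := by
    simpa using hasDerivAt_hankel hm hf x
  have hderiv' (x : ℝ) :
      HasDerivAt (fun x => -hankel (m + 1) f x) (x • hankel (m + 2) f x) x := by
    simpa [add_assoc, one_add_one_eq_two] using (hasDerivAt_hankel hm1 hf x).fun_neg
  rw [sq_smul_hankel hm (isSchwartz_hankel hm hf he) hg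
    (isSchwartz_hankel (by linarith : -1 < m + 2) hf he) hderiv hderiv', ← hankel_neg]
  congr 1
  ext u
  rw [hankel_sq_smul hm hf]
  module

end InverseDerivative

end Hankel

section Involution

/-- The Gaussian, normalized so that every Hankel transform fixes it. -/
noncomputable def gaussian (x : ℝ) : ℝ := exp (-(1 / 2) * x ^ 2)

theorem even_gaussian : gaussian.Even := fun x => by simp only [gaussian, neg_sq]

theorem gaussian_pos (x : ℝ) : 0 < gaussian x := exp_pos _

theorem hasDerivAt_gaussian (x : ℝ) : HasDerivAt gaussian (-(x * gaussian x)) x := by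
  refine (((hasDerivAt_id x).pow 2).const_mul (-(1 / 2))).exp.congr_deriv ?_
  simp only [gaussian, Pi.pow_apply, id]
  ring

theorem rapidDecay_gaussian : RapidDecay gaussian := by
  refine rapidDecay_iff.2 fun k => ⟨1 + 2 ^ k * k.factorial, fun x => ?_⟩
  have hpow : |x| ^ k ≤ 1 + (x ^ 2) ^ k := by
    rw [← sq_abs, ← pow_mul, mul_comm 2 k, pow_mul]
    nlinarith [sq_nonneg (|x| ^ k - 1)]
  have hexp : (x ^ 2) ^ k ≤ 2 ^ k * k.factorial * exp (1 / 2 * x ^ 2) := by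
    have h := pow_div_factorial_le_exp (1 / 2 * x ^ 2) (by positivity) k
    rw [div_le_iff₀ (by positivity)] at h
    calc (x ^ 2) ^ k = 2 ^ k * (1 / 2 * x ^ 2) ^ k := by rw [← mul_pow]; ring
      _ ≤ 2 ^ k * (exp (1 / 2 * x ^ 2) * k.factorial) := by gcongr
      _ = _ := by ring
  have hle : gaussian x ≤ 1 := exp_le_one_iff.2 (by nlinarith [sq_nonneg x])
  have hinv : exp (1 / 2 * x ^ 2) * gaussian x = 1 := by
    rw [gaussian, ← exp_add, neg_mul, add_neg_cancel, exp_zero]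
  rw [norm_eq_abs, abs_of_pos (gaussian_pos x)]
  calc |x| ^ k * gaussian x
      ≤ (1 + 2 ^ k * k.factorial * exp (1 / 2 * x ^ 2)) * gaussian x :=
        mul_le_mul_of_nonneg_right (by linarith) (gaussian_pos x).le
    _ = gaussian x + 2 ^ k * k.factorial := by linear_combination 2 ^ k * k.factorial * hinv
    _ ≤ 1 + 2 ^ k * k.factorial := by gcongr

theorem isSchwartz_gaussian : IsSchwartz gaussian :=
  isSchwartz_of_hasDerivAt_neg_smul (G := fun _ => gaussian) (fun _ => hasDerivAt_gaussian)
    (fun _ => rapidDecay_gaussian) 0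

variable {E : Type*} [NormedAddCommGroup E] [NormedSpace ℝ E] {f : ℝ → E} {m : ℝ}

theorem hankel_gaussian_zero (hm : -1 < m) : hankel m gaussian 0 = 1 := by
  have hG : Gamma (m + 1) ≠ 0 := (Gamma_pos_of_pos (by linarith)).ne'
  have hmoment : ∫ u : ℝ, |u| ^ (2 * m + 1) * gaussian u = 2 ^ (m + 1) * Gamma (m + 1) := by
    have h := integral_comp_abs (f := fun u : ℝ => u ^ (2 * m + 1) * exp (-(1 / 2) * u ^ (2 : ℝ)))
    rw [integral_rpow_mul_exp_neg_mul_rpow two_pos (by linarith) (by norm_num)] at h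
    simp only [rpow_two, sq_abs] at h
    simp only [gaussian, h]
    rw [show (2 * m + 1 + 1) / 2 = m + 1 by ring, show -(2 * m + 1 + 1) / 2 = -(m + 1) by ring,
      one_div, inv_rpow two_pos.le, rpow_neg two_pos.le]
    field_simp
  have hkernel (u : ℝ) : hankelKernel m u 0 • gaussian u =
      (2 ^ (m + 1) * Gamma (m + 1))⁻¹ * (|u| ^ (2 * m + 1) * gaussian u) := by
    simp only [hankelKernel, mul_zero, zero_div, ne_eq, OfNat.ofNat_ne_zero, not_false_eq_true,
      zero_pow, neg_zero, besselClifford_zero, smul_eq_mul]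
    field_simp
  simp only [hankel, hkernel, integral_const_mul, hmoment]
  exact inv_mul_cancel₀ (by positivity)

theorem hankel_add_one_gaussian (hm : -1 < m) (v : ℝ) :
    hankel (m + 1) gaussian v = hankel m gaussian v := by
  have h := hankel_add_one_of_hasDerivAt hm isSchwartz_gaussian
    (isSchwartz_gaussian.const_smul (-1 : ℝ))
    (fun x => by simpa using hasDerivAt_gaussian x) v
  rw [hankel_const_smul] at h
  simpa using h

-- The transform and the Gaussian solve the same linear first-order equation.
theorem hankel_gaussian (hm : -1 < m) (v : ℝ) : hankel m gaussian v = gaussian v := by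
  have hd (x : ℝ) : HasDerivAt (fun x => hankel m gaussian x / gaussian x) 0 x := by
    have h := hasDerivAt_hankel hm isSchwartz_gaussian x
    rw [hankel_add_one_gaussian hm, smul_eq_mul] at h
    exact (h.div (hasDerivAt_gaussian x) (gaussian_pos x).ne').congr_deriv (by ring)
  have hconst := is_const_of_deriv_eq_zero (fun x => (hd x).differentiableAt)
    (fun x => (hd x).deriv) v 0
  have h0 : gaussian 0 = 1 := by simp [gaussian]
  rwa [hankel_gaussian_zero hm, h0, div_one, div_eq_one_iff_eq (gaussian_pos v).ne'] at hconst

theorem hankel_gaussian_smul [CompleteSpace E] (hm : -1 < m) (y : E) (v : ℝ) :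
    hankel m (fun x => gaussian x • y) v = gaussian v • y := by
  rw [← hankel_gaussian hm v]
  simp only [hankel, ← integral_smul_const, smul_eq_mul, mul_smul]

theorem hankel_hankel [CompleteSpace E] (hm : -1 < m) (hf : IsSchwartz f) (he : f.Even) (a : ℝ) :
    hankel m (hankel m f) a = f a := by
  set y : E := (gaussian a)⁻¹ • f a with hy
  have hγ := isSchwartz_gaussian.smul_const y
  obtain ⟨g, hg, hge, hfg⟩ := (hf.sub hγ).exists_eq_sq_sub_sq_smul
    (fun x => by simp only [he x, even_gaussian x]) (a := a)
    (by rw [hy, smul_inv_smul₀ (gaussian_pos a).ne', sub_self])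
  have hsq := hg.pow_smul 2
  have hsqe : Function.Even fun x => x ^ 2 • g x := fun x => by simp only [hge x, neg_sq]
  have hHsq := isSchwartz_hankel hm hsq hsqe
  have hHg := (isSchwartz_hankel hm hg hge).const_smul (a ^ 2)
  have hf_eq : f = fun x => x ^ 2 • g x - a ^ 2 • g x + gaussian x • y :=
    funext fun x => by rw [← sub_smul, ← hfg, sub_add_cancel]
  have hHf : hankel m f = fun v =>
      hankel m (fun x => x ^ 2 • g x) v - a ^ 2 • hankel m g v + gaussian v • y := by
    ext v
    rw [hf_eq, hankel_add hm (hsq.sub (hg.const_smul _)) hγ, hankel_sub hm hsq (hg.const_smul _),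
      hankel_const_smul, hankel_gaussian_smul hm]
  rw [hHf, hankel_add hm (hHsq.sub hHg) hγ, hankel_sub hm hHsq hHg, hankel_const_smul,
    hankel_gaussian_smul hm, hankel_hankel_sq_smul hm hg hge, sub_self, zero_add, hy,
    smul_inv_smul₀ (gaussian_pos a).ne']

end Involution

section ParityDecomposition

variable {E : Type*} [NormedAddCommGroup E] [NormedSpace ℝ E] {f a b : ℝ → E} {n : ℕ}

theorem iteratedDeriv_even_zero (he : f.Even) {k : ℕ} (hk : Odd k) : iteratedDeriv k f 0 = 0 := by
  have : IsAddTorsionFree E := .of_isTorsionFree ℝ E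
  have h := iteratedDeriv_comp_neg k f 0
  rwa [funext he, neg_zero, hk.neg_one_pow, neg_one_smul, self_eq_neg] at h

theorem iteratedDeriv_even_add_pow_smul_zero (ha : IsSchwartz a) (hae : a.Even)
    (hb : IsSchwartz b) {k : ℕ} (hk : Odd k) (hkn : k < n) :
    iteratedDeriv k (fun x => a x + x ^ n • b x) 0 = 0 := by
  have hle : (k : WithTop ℕ∞) ≤ ∞ := by exact_mod_cast le_top
  rw [iteratedDeriv_fun_add (ha.contDiff.contDiffAt.of_le hle)
    ((hb.pow_smul n).contDiff.contDiffAt.of_le hle), iteratedDeriv_even_zero hae hk,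
    iteratedDeriv_pow_smul_zero hb.contDiff hkn, add_zero]

theorem IsSchwartz.exists_even_add_pow_smul_even [CompleteSpace E] (hf : IsSchwartz f)
    (hn : Odd n) (h0 : ∀ k < n, Odd k → iteratedDeriv k f 0 = 0) :
    ∃ a b : ℝ → E, IsSchwartz a ∧ IsSchwartz b ∧ a.Even ∧ b.Even ∧
      ∀ x, f x = a x + x ^ n • b x := by
  obtain ⟨b, hb, hfb⟩ := (hf.sub hf.comp_neg).exists_eq_pow_smul (n := n) fun k hk => by
    have hle : (k : WithTop ℕ∞) ≤ ∞ := by exact_mod_cast le_top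
    rw [iteratedDeriv_fun_sub (hf.contDiff.contDiffAt.of_le hle)
      (hf.comp_neg.contDiff.contDiffAt.of_le hle), iteratedDeriv_comp_neg, neg_zero]
    rcases k.even_or_odd with hk' | hk'
    · rw [hk'.neg_one_pow, one_smul, sub_self]
    · rw [h0 k hk hk', smul_zero, sub_zero]
  refine ⟨_, _, hf.evenPart, hb.evenPart.const_smul (2⁻¹ : ℝ), fun x => by simp [add_comm],
    fun x => by simp [add_comm], fun x => ?_⟩
  have hx := hfb x
  have hnx := hfb (-x)
  rw [neg_neg, hn.neg_pow] at hnx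
  linear_combination (norm := module) (4⁻¹ : ℝ) • hx - (4⁻¹ : ℝ) • hnx

theorem inSn_iff_exists_even_add_pow_smul_even {r : ℕ} {g : 𝓢(ℝ, ℂ)} :
    InSn r g ↔ ∃ a b : ℝ → ℂ, IsSchwartz a ∧ IsSchwartz b ∧ a.Even ∧ b.Even ∧
      ∀ x, g x = a x + x ^ (2 * r + 1) • b x := by
  constructor
  · refine fun hg => IsSchwartz.exists_even_add_pow_smul_even ⟨g, rfl⟩ (odd_two_mul_add_one r) ?_
    rintro _ hk ⟨s, rfl⟩
    exact hg s (by lia)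
  · rintro ⟨a, b, ha, hb, hae, -, hg⟩ s hs
    rw [funext hg]
    exact iteratedDeriv_even_add_pow_smul_zero ha hae hb (odd_two_mul_add_one s) (by lia)

end ParityDecomposition

section ShiftedKernel

variable {E : Type*} [NormedAddCommGroup E] [NormedSpace ℝ E] {f : ℝ → E} {m : ℝ}

/-- The kernel `v ^ n * hankelKernel (m + n) u v / u ^ n`, written without the division by a power
of `u`. For `n = 2r + 1` it is, up to a constant, the part of the kernel of `Ftrans` that is odd
in `u`. -/
noncomputable def shiftedHankelKernel (m : ℝ) (n : ℕ) (u v : ℝ) : ℝ :=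
  |u| ^ (2 * m + 1) / 2 ^ (m + 1) * (u * v / 2) ^ n * besselClifford (m + n) (-(u * v / 2) ^ 2)

theorem shiftedHankelKernel_mul_pow (hm : -1 < m) (n : ℕ) (u v : ℝ) :
    shiftedHankelKernel m n u v * u ^ n = v ^ n * hankelKernel (m + n) u v := by
  rw [hankelKernel_add_natCast hm, shiftedHankelKernel]
  simp only [div_pow, mul_pow]
  ring

theorem shiftedHankelKernel_neg_left {n : ℕ} (hn : Odd n) (m u v : ℝ) :
    shiftedHankelKernel m n (-u) v = -shiftedHankelKernel m n u v := by
  simp only [shiftedHankelKernel, abs_neg, neg_mul, neg_div, hn.neg_pow, neg_sq, mul_neg]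

theorem IsSchwartz.integrable_shiftedHankelKernel_smul (hf : IsSchwartz f) (hm : -1 < m) (n : ℕ)
    (v : ℝ) : Integrable fun u => shiftedHankelKernel m n u v • f u := by
  obtain ⟨A, hA⟩ := exists_abs_besselClifford_neg_sq_le
    (by linarith [n.cast_nonneg (α := ℝ)] : -(3 / 2) ≤ m + n) v
  have hc : Continuous fun u => besselClifford (m + n) (-(u * v / 2) ^ 2) :=
    (continuous_besselClifford _).comp (by fun_prop)
  refine (((hf.pow_smul n).integrable_abs_rpow_mul_smul (by linarith : -1 < 2 * m + 1) hc
    hA).smul ((v / 2) ^ n / 2 ^ (m + 1))).congr (Eventually.of_forall fun u => ?_)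
  simp only [Pi.smul_apply, shiftedHankelKernel, smul_smul]
  congr 1
  simp only [div_pow, mul_pow]
  ring

theorem integral_shiftedHankelKernel_smul_pow_smul (hm : -1 < m) (n : ℕ) (f : ℝ → E) (v : ℝ) :
    ∫ u, shiftedHankelKernel m n u v • u ^ n • f u = v ^ n • hankel (m + n) f v := by
  rw [hankel, ← integral_smul]
  exact integral_congr_ae (Eventually.of_forall fun u => by
    simp only [smul_smul, shiftedHankelKernel_mul_pow hm])

theorem integral_shiftedHankelKernel_smul_of_even {n : ℕ} (hn : Odd n) (m : ℝ) (hf : f.Even)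
    (v : ℝ) : ∫ u, shiftedHankelKernel m n u v • f u = 0 :=
  integral_eq_zero_of_odd fun u => by rw [shiftedHankelKernel_neg_left hn, hf, neg_smul]

theorem hankel_of_odd (m : ℝ) (hf : f.Odd) (v : ℝ) : hankel m f v = 0 :=
  integral_eq_zero_of_odd fun u => by rw [hankelKernel_neg_left, hf, smul_neg]

end ShiftedKernel

/-! ### The transform on `S_r` -/

section Transform

variable {r : ℕ} {l : ℝ}

theorem nbessel_eq_Gamma_mul_besselClifford (m v : ℝ) :
    nbessel m v = Gamma (m + 1) * besselClifford m (-(v / 2) ^ 2) := by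
  rw [nbessel, besselClifford]
  congr 2 with k
  rw [besselCliffordCoeff, neg_pow ((v / 2) ^ 2), ← pow_mul]
  ring

theorem poch_mul_Gamma {z : ℝ} (hz : 0 < z) (n : ℕ) : poch z n * Gamma z = Gamma (z + n) := by
  induction n with
  | zero => simp [poch]
  | succ n ih =>
    have hzn : z + n ≠ 0 := by positivity
    rw [Nat.cast_succ, ← add_assoc, Gamma_add_one hzn, ← ih, poch, poch, prod_range_succ]
    ring

theorem normalized_e2r1_mul (hl : -1 < l) (r : ℕ) (u v : ℝ) :
    ((1 / (2 ^ (l + 1) * Gamma (l + 1)) : ℝ) : ℂ) * e2r1 r l (u * v) *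
      ((|u| ^ (2 * l + 1) : ℝ) : ℂ) = (hankelKernel l u v : ℂ) +
        Complex.I * (-1) ^ (r + 1) * (shiftedHankelKernel l (2 * r + 1) u v : ℂ) := by
  have hG : 0 < Gamma (l + 1) := Gamma_pos_of_pos (by linarith)
  have hpoch := poch_mul_Gamma (by linarith : 0 < l + 1) (2 * r + 1)
  have hP : 0 < poch (l + 1) (2 * r + 1) :=
    prod_pos fun i _ => by linarith [i.cast_nonneg (α := ℝ)]
  have hcast : l + (2 * r + 1) = l + (2 * r + 1 : ℕ) := by push_cast; ring
  have heven : 1 / (2 ^ (l + 1) * Gamma (l + 1)) * nbessel l (u * v) * |u| ^ (2 * l + 1) =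
      hankelKernel l u v := by
    rw [nbessel_eq_Gamma_mul_besselClifford, hankelKernel]
    field_simp
  have hodd : 1 / (2 ^ (l + 1) * Gamma (l + 1)) *
      ((u * v) ^ (2 * r + 1) / (2 ^ (2 * r + 1) * poch (l + 1) (2 * r + 1))) *
      nbessel (l + (2 * r + 1)) (u * v) * |u| ^ (2 * l + 1) =
        shiftedHankelKernel l (2 * r + 1) u v := by
    rw [hcast, nbessel_eq_Gamma_mul_besselClifford, add_right_comm, ← hpoch, shiftedHankelKernel,
      div_pow (u * v) 2 (2 * r + 1)]
    field_simp
  rw [e2r1, ← heven, ← hodd]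
  push_cast
  ring

theorem Ftrans_eq_hankel_add (hl : -1 < l) {g : ℝ → ℂ} (hg : IsSchwartz g) (r : ℕ) (v : ℝ) :
    Ftrans r l g v = hankel l g v + Complex.I * (-1) ^ (r + 1) *
      ∫ u, shiftedHankelKernel l (2 * r + 1) u v • g u := by
  rw [Ftrans, hankel, ← integral_const_mul, ← integral_const_mul, ← integral_add
    (hg.integrable_hankelKernel_smul hl v)
    ((hg.integrable_shiftedHankelKernel_smul hl _ v).const_mul _)]
  refine integral_congr_ae (Eventually.of_forall fun u => ?_)
  simp only [Complex.real_smul]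
  linear_combination g u * normalized_e2r1_mul hl r u v

theorem Ftrans_even_add_pow_smul_even (hl : -1 < l) {a b : ℝ → ℂ} (ha : IsSchwartz a)
    (hb : IsSchwartz b) (hae : a.Even) (hbe : b.Even) (v : ℝ) :
    Ftrans r l (fun x => a x + x ^ (2 * r + 1) • b x) v =
      hankel l a v + v ^ (2 * r + 1) •
        ((Complex.I * (-1) ^ (r + 1)) • hankel (l + (2 * r + 1 : ℕ)) b v) := by
  have hr := odd_two_mul_add_one r
  have hbn := hb.pow_smul (2 * r + 1)
  have hodd : Function.Odd fun x => x ^ (2 * r + 1) • b x := fun x => by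
    simp only [hbe x, hr.neg_pow, neg_smul]
  rw [Ftrans_eq_hankel_add hl (ha.add hbn), hankel_add hl ha hbn, hankel_of_odd l hodd, add_zero]
  simp only [smul_add]
  rw [integral_add (ha.integrable_shiftedHankelKernel_smul hl _ v)
    (hbn.integrable_shiftedHankelKernel_smul hl _ v),
    integral_shiftedHankelKernel_smul_of_even hr l hae, zero_add,
    integral_shiftedHankelKernel_smul_pow_smul hl, ← smul_eq_mul, smul_comm]

theorem InSn.exists_eq_Ftrans {g : 𝓢(ℝ, ℂ)} (hg : InSn r g) (hl : -1 < l) :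
    ∃ h : 𝓢(ℝ, ℂ), InSn r h ∧ ∀ v, Ftrans r l g v = h v := by
  obtain ⟨a, b, ha, hb, hae, hbe, hgab⟩ := inSn_iff_exists_even_add_pow_smul_even.1 hg
  have hHa := isSchwartz_hankel hl ha hae
  have hHb := (isSchwartz_hankel (m := l + (2 * r + 1 : ℕ)) (lt_add_of_lt_of_nonneg hl
    (Nat.cast_nonneg _)) hb hbe).const_smul (Complex.I * (-1) ^ (r + 1))
  obtain ⟨h, hh⟩ := hHa.add (hHb.pow_smul (2 * r + 1))
  refine ⟨h, inSn_iff_exists_even_add_pow_smul_even.2 ⟨_, _, hHa, hHb, even_hankel l a,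
    fun v => by simp only [even_hankel _ b v], congrFun hh⟩, fun v => ?_⟩
  rw [funext hgab, Ftrans_even_add_pow_smul_even hl ha hb hae hbe, hh]

theorem InSn.Ftrans_Ftrans {g : 𝓢(ℝ, ℂ)} (hg : InSn r g) (hl : -1 < l) (v : ℝ) :
    Ftrans r l (Ftrans r l g) v = g (-v) := by
  obtain ⟨a, b, ha, hb, hae, hbe, hgab⟩ := inSn_iff_exists_even_add_pow_smul_even.1 hg
  have hln : -1 < l + (2 * r + 1 : ℕ) := lt_add_of_lt_of_nonneg hl (Nat.cast_nonneg _)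
  have hκ : (Complex.I * (-1) ^ (r + 1)) * (Complex.I * (-1) ^ (r + 1)) = -1 := by
    rw [mul_mul_mul_comm, Complex.I_mul_I, ← mul_pow, neg_mul_neg, one_mul, one_pow, mul_one]
  rw [hgab (-v), funext hgab, funext (Ftrans_even_add_pow_smul_even hl ha hb hae hbe),
    Ftrans_even_add_pow_smul_even hl (isSchwartz_hankel hl ha hae)
      ((isSchwartz_hankel hln hb hbe).const_smul _) (even_hankel l a)
      (fun v => by simp only [even_hankel _ b v]),
    hankel_const_smul, hankel_hankel hl ha hae, hankel_hankel hln hb hbe, smul_smul, hκ, hae, hbe,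
    (odd_two_mul_add_one r).neg_pow]
  module

end Transform

theorem stmt19_general (r : ℕ) (l : ℝ) (hl : -1 < l) :
    (∀ g : SchwartzMap ℝ ℂ, InSn r g →
      ∃ h : SchwartzMap ℝ ℂ, InSn r h ∧ ∀ v : ℝ, Ftrans r l (⇑g) v = h v) ∧
    (∀ h : SchwartzMap ℝ ℂ, InSn r h →
      ∃ g : SchwartzMap ℝ ℂ, InSn r g ∧ ∀ v : ℝ, Ftrans r l (⇑g) v = h v) := by
  refine ⟨fun g hg => hg.exists_eq_Ftrans hl, fun h hh => ?_⟩
  obtain ⟨h₁, hh₁, hFh⟩ := hh.exists_eq_Ftrans hl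
  obtain ⟨h₂, hh₂, hFh₁⟩ := hh₁.exists_eq_Ftrans hl
  obtain ⟨h₃, hh₃, hFh₂⟩ := hh₂.exists_eq_Ftrans hl
  refine ⟨h₃, hh₃, fun v => ?_⟩
  rw [← funext hFh₂, hh₂.Ftrans_Ftrans hl, ← hFh₁, ← funext hFh, hh.Ftrans_Ftrans hl, neg_neg]

/-- the transform F_r^lambda maps S_r(ℝ) onto S_r(ℝ). -/
theorem stmt19 (r : ℕ) (l : ℝ) (hl : -(1 / 2 : ℝ) < l) :
    (∀ g : SchwartzMap ℝ ℂ, InSn r g →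
      ∃ h : SchwartzMap ℝ ℂ, InSn r h ∧ ∀ v : ℝ, Ftrans r l (⇑g) v = h v) ∧
    (∀ h : SchwartzMap ℝ ℂ, InSn r h →
      ∃ g : SchwartzMap ℝ ℂ, InSn r g ∧ ∀ v : ℝ, Ftrans r l (⇑g) v = h v) :=
  stmt19_general r l (by linarith)
end
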